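/- arXiv:2308.14467 — 12 statements merged into one kernel-verified Lean document; each statement's English description precedes it below -/
import Mathlib

section
/- Let λ be a singular cardinal. Then (cf(λ))⁺ is not a λ-revision cardinal; that is, for every cardinal σ < (cf(λ))⁺ we have cov(λ, (cf(λ))⁺, (cf(λ))⁺, σ) > λ. -/
/-!
The proof is a diagonalization. Let `κ = cf λ` and let `X` be a covering family with at most `λ`
members, each of size at most `κ`. Index `X` injectively by the well-order of type `λ` and fix a
cofinal set `S` of size `κ` in it. For `s ∈ S`, the members of `X` with index below `s` number
fewer than `λ`, so (as `κ < λ`) their union has size less than `λ` and misses a point `p s`.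
The set `{p s | s ∈ S}` has size at most `κ`, but fewer than `κ` members of `X` have indices
bounded by some `s ∈ S`, so their union misses `p s`. Hence every covering family has more than
`λ` members (`lt_mk_of_isCovFamily`). If no covering family exists, `cov` takes the value `2 ^ λ`,
which also exceeds `λ`.
-/

open Cardinal Set

universe u

/-- `X ⊆ 𝒫_{ρ₂}(ρ₁)` is a family witnessing the covering number `cov (ρ₁, ρ₂, ρ₃, ρ₄)`:
every `b ∈ 𝒫_{ρ₃}(ρ₁)` is covered by the union of fewer than `ρ₄` members of `X`. -/
def IsCovFamily (ρ₁ ρ₂ ρ₃ ρ₄ : Cardinal.{u}) (X : Set (Set ρ₁.out)) : Prop :=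
  (∀ x ∈ X, #x < ρ₂) ∧
    ∀ b : Set ρ₁.out, #b < ρ₃ →
      ∃ Q : Set (Set ρ₁.out), Q ⊆ X ∧ #Q < ρ₄ ∧ b ⊆ ⋃₀ Q

open scoped Classical in
/-- The covering number `cov (ρ₁, ρ₂, ρ₃, ρ₄)`: the least cardinality of a set
`X ⊆ 𝒫_{ρ₂}(ρ₁)` such that every `b ∈ 𝒫_{ρ₃}(ρ₁)` is included in the union of
fewer than `ρ₄` members of `X` (with value `2 ^ ρ₁` if no such family exists). -/
noncomputable def cov (ρ₁ ρ₂ ρ₃ ρ₄ : Cardinal.{u}) : Cardinal.{u} :=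
  if ∃ X, IsCovFamily ρ₁ ρ₂ ρ₃ ρ₄ X then
    sInf {κ | ∃ X, IsCovFamily ρ₁ ρ₂ ρ₃ ρ₄ X ∧ #X = κ}
  else 2 ^ ρ₁

/-- `χ` is a `λ`-revision cardinal: `cov (λ, χ, χ, σ) ≤ λ` for some cardinal `σ < χ`. -/
def IsRevision (χ lam : Cardinal.{u}) : Prop :=
  ∃ σ < χ, cov lam χ χ σ ≤ lam

/-- `c` is a limit cardinal: infinite and not the successor of any cardinal. -/
def IsLimitCard (c : Cardinal.{u}) : Prop :=
  ℵ₀ ≤ c ∧ ∀ μ : Cardinal.{u}, c ≠ Order.succ μ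

/-- `Z ⊆ 𝒫_τ(λ)` is a family witnessing `equal (λ, τ, ρ, σ)`: every `b ∈ [λ]^ρ` is
the union of fewer than `σ` members of `Z`. -/
def IsEqualFamily (lam tau rho sigma : Cardinal.{u}) (Z : Set (Set lam.out)) : Prop :=
  (∀ z ∈ Z, #z < tau) ∧
    ∀ b : Set lam.out, #b = rho →
      ∃ e : Set (Set lam.out), e ⊆ Z ∧ #e < sigma ∧ b = ⋃₀ e

open scoped Classical in
/-- `equal (λ, τ, ρ, σ)`: the least cardinality of a set `Z ⊆ 𝒫_τ(λ)` such that every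
`b ∈ [λ]^ρ` is the union of fewer than `σ` members of `Z`; `2 ^ λ` if no such `Z` exists. -/
noncomputable def equalCov (lam tau rho sigma : Cardinal.{u}) : Cardinal.{u} :=
  if ∃ Z, IsEqualFamily lam tau rho sigma Z then
    sInf {κ | ∃ Z, IsEqualFamily lam tau rho sigma Z ∧ #Z = κ}
  else 2 ^ lam

/-- `Z ⊆ 𝒫_τ(λ)` is a family witnessing `equal (λ, τ, <ρ, σ)`: every `b ∈ 𝒫_ρ(λ)` is
the union of fewer than `σ` members of `Z`. -/
def IsEqualLtFamily (lam tau rho sigma : Cardinal.{u}) (Z : Set (Set lam.out)) : Prop :=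
  (∀ z ∈ Z, #z < tau) ∧
    ∀ b : Set lam.out, #b < rho →
      ∃ e : Set (Set lam.out), e ⊆ Z ∧ #e < sigma ∧ b = ⋃₀ e

open scoped Classical in
/-- `equal (λ, τ, <ρ, σ)`: the least cardinality of a set `Z ⊆ 𝒫_τ(λ)` such that every
`b ∈ 𝒫_ρ(λ)` is the union of fewer than `σ` members of `Z`; `2 ^ λ` if no such `Z` exists. -/
noncomputable def equalLtCov (lam tau rho sigma : Cardinal.{u}) : Cardinal.{u} :=
  if ∃ Z, IsEqualLtFamily lam tau rho sigma Z then
    sInf {κ | ∃ Z, IsEqualLtFamily lam tau rho sigma Z ∧ #Z = κ}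
  else 2 ^ lam

/-- The diagonalization: a family covering all sets of size at most `cf λ` by fewer than `σ`
members, where `σ ≤ cf λ`, has more than `λ` members. -/
theorem lt_mk_of_isCovFamily {lam σ : Cardinal.{u}} (hinf : ℵ₀ ≤ lam)
    (hsing : lam.ord.cof < lam) (hσ : σ ≤ lam.ord.cof) {X : Set (Set lam.out)}
    (hX : IsCovFamily lam (Order.succ lam.ord.cof) (Order.succ lam.ord.cof) σ X) :
    lam < #X := by
  by_contra! hle
  obtain ⟨hsmall, hcov⟩ := hX
  obtain ⟨f⟩ : Nonempty (X ↪ lam.ord.ToType) := by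
    rwa [← Cardinal.le_def, mk_ord_toType]
  obtain ⟨S, hS, hScard⟩ := Order.exists_cof_eq lam.ord.ToType
  rw [Ordinal.cof_toType] at hScard
  -- The piece of `X` indexed below `w` covers fewer than `λ` points, so it misses some point.
  have hmiss : ∀ w : lam.ord.ToType, ∃ p : lam.out, ∀ x : X, f x < w → p ∉ x.1 := by
    intro w
    by_contra! hall
    have hpiece : #{x : X | f x < w} < lam := by
      have h1 : #{x : X | f x < w} ≤ #(Iio w) :=
        mk_le_of_injective (f := fun x => ⟨f x.1, x.2⟩) fun a b hab =>
          Subtype.ext (f.injective (congrArg Subtype.val hab))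
      have h2 : #(Iio w) < lam := by simpa using mk_Iio_lt w
      exact h1.trans_lt h2
    have hunion : #(⋃ x : {x : X | f x < w}, x.1.1) < lam := by
      have h1 := mk_iUnion_le_sum_mk (f := fun x : {x : X | f x < w} => x.1.1)
      have h2 : Cardinal.sum (fun x : {x : X | f x < w} => #x.1.1) ≤
          #{x : X | f x < w} * lam.ord.cof := by
        rw [← sum_const']
        exact sum_le_sum _ _ fun x => Order.lt_succ_iff.1 (hsmall _ x.1.2)
      exact (h1.trans h2).trans_lt (mul_lt_of_lt hinf hpiece hsing)
    have huniv : (⋃ x : {x : X | f x < w}, x.1.1) = Set.univ := by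
      refine eq_univ_of_forall fun p => ?_
      obtain ⟨x, hx, hp⟩ := hall p
      exact mem_iUnion.2 ⟨⟨x, hx⟩, hp⟩
    rw [huniv, mk_univ, mk_out] at hunion
    exact hunion.false
  choose p hp using hmiss
  obtain ⟨Q, hQX, hQ, hcovQ⟩ := hcov (image p S)
    (Order.lt_succ_iff.2 (mk_image_le.trans hScard.le))
  -- Fewer than `cf λ` indices are strictly bounded by some `w`.
  obtain ⟨w, hw⟩ : ∃ w, ∀ q : Q, f ⟨q.1, hQX q.2⟩ < w := by
    by_contra! hunb
    have hcof : IsCofinal (range fun q : Q => f ⟨q.1, hQX q.2⟩) := fun w =>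
      let ⟨q, hq⟩ := hunb w
      ⟨_, mem_range_self q, hq⟩
    have h1 := (Order.cof_le hcof).trans mk_range_le
    rw [Ordinal.cof_toType] at h1
    exact ((hQ.trans_le hσ).trans_le h1).false
  obtain ⟨s, hsS, hws⟩ := hS w
  obtain ⟨q, hqQ, hpq⟩ := hcovQ (mem_image_of_mem p hsS)
  exact hp s ⟨q, hQX hqQ⟩ ((hw ⟨q, hqQ⟩).trans_le hws) hpq

/-- Let `λ` be a singular cardinal. Then `(cf λ)⁺` is not a
`λ`-revision cardinal; that is, for every cardinal `σ < (cf λ)⁺` we have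
`cov (λ, (cf λ)⁺, (cf λ)⁺, σ) > λ`. -/
theorem stmt0 (lam : Cardinal.{u}) (hinf : ℵ₀ ≤ lam) (hsing : lam.ord.cof < lam) :
    ¬ IsRevision (Order.succ lam.ord.cof) lam ∧
      ∀ σ : Cardinal.{u}, σ < Order.succ lam.ord.cof →
        lam < cov lam (Order.succ lam.ord.cof) (Order.succ lam.ord.cof) σ := by
  have key : ∀ σ : Cardinal.{u}, σ < Order.succ lam.ord.cof →
      lam < cov lam (Order.succ lam.ord.cof) (Order.succ lam.ord.cof) σ := by
    intro σ hσ
    unfold cov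
    split_ifs with h
    · obtain ⟨X, hX, hcard⟩ := csInf_mem
        (s := {κ | ∃ X, IsCovFamily lam (Order.succ lam.ord.cof)
          (Order.succ lam.ord.cof) σ X ∧ #X = κ})
        (let ⟨X, hX⟩ := h; ⟨_, X, hX, rfl⟩)
      rw [← hcard]
      exact lt_mk_of_isCovFamily hinf hsing (Order.lt_succ_iff.1 hσ) hX
    · exact cantor lam
  exact ⟨fun ⟨σ, hσ, hle⟩ => (key σ hσ).not_ge hle, key⟩
end

section
/- Let χ ≤ λ be two uncountable cardinals and suppose that χ is a λ-revision cardinal. Then χ is a λ⁺-revision cardinal. -/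
/-!
Regularity of `λ⁺` makes the same `σ` work. A set `b ⊆ λ⁺` with `#b < χ ≤ λ` is bounded by some
`β < λ⁺` (`exists_injOn_cover`), and `β` injects into `λ`. Pulling a covering family on `λ` back
along one such injection for each `β`, and collecting all the pullbacks, gives a covering family
on `λ⁺` of size at most `λ⁺ * λ = λ⁺`.
-/

open Cardinal Set

universe u

/-- Since `cov` takes the value `2 ^ ρ > ρ` when there is no covering family, the bound
`cov ρ χ χ σ ≤ ρ` provides an actual family. -/
lemma exists_family_of_cov_le {ρ χ σ : Cardinal.{u}} (h : cov ρ χ χ σ ≤ ρ) :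
    ∃ X, IsCovFamily ρ χ χ σ X ∧ #X ≤ ρ := by
  unfold cov at h
  split_ifs at h with hX
  · obtain ⟨X, hX⟩ := hX
    obtain ⟨Y, hY, hc⟩ :=
      csInf_mem (s := {κ | ∃ X, IsCovFamily ρ χ χ σ X ∧ #X = κ}) ⟨_, X, hX, rfl⟩
    exact ⟨Y, hY, hc.trans_le h⟩
  · exact absurd h (cantor ρ).not_ge

lemma cov_le_of_family {ρ χ σ κ : Cardinal.{u}} {X : Set (Set ρ.out)}
    (hX : IsCovFamily ρ χ χ σ X) (hκ : #X ≤ κ) : cov ρ χ χ σ ≤ κ := by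
  unfold cov
  rw [if_pos ⟨X, hX⟩]
  have hmem : #X ∈ {κ | ∃ X, IsCovFamily ρ χ χ σ X ∧ #X = κ} := ⟨X, hX, rfl⟩
  exact (csInf_le' hmem).trans hκ

/-- `λ⁺` is a `≤ λ`-directed union of `λ⁺` many sets (its initial segments), each of which
injects into `λ`. -/
lemma exists_injOn_cover {lam : Cardinal.{u}} (hlam : ℵ₀ ≤ lam) :
    ∃ (s : (Order.succ lam).out → Set (Order.succ lam).out)
      (f : ∀ β, s β → lam.out), (∀ β, Function.Injective (f β)) ∧
        ∀ b : Set (Order.succ lam).out, #b ≤ lam → ∃ β, b ⊆ s β := by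
  obtain ⟨e⟩ : Nonempty ((Order.succ lam).out ≃ (Order.succ lam).ord.ToType) := by
    rw [← Cardinal.eq]; simp
  have hs : ∀ β, Nonempty (e ⁻¹' Iio (e β) ↪ lam.out) := fun β ↦ by
    rw [← Cardinal.le_def, mk_out, ← Order.lt_succ_iff]
    have h1 : #(Iio (e β)) < Order.succ lam := by
      simpa using mk_Iio_lt (e β) (by simp)
    exact (mk_preimage_of_injective _ _ e.injective).trans_lt h1
  refine ⟨fun β ↦ e ⁻¹' Iio (e β), fun β ↦ (hs β).some, fun β ↦ (hs β).some.injective, ?_⟩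
  intro b hb
  have hc : ¬ IsCofinal (e '' b) := fun h ↦ by
    have h1 := Order.cof_le h
    rw [Ordinal.cof_toType, (isRegular_succ hlam).cof_ord] at h1
    exact (h1.trans mk_image_le).not_gt (Order.lt_succ_of_le hb)
  obtain ⟨x, hx⟩ := not_isCofinal_iff.1 hc
  refine ⟨e.symm x, fun a ha ↦ ?_⟩
  simpa using hx (e a) (mem_image_of_mem e ha)

/-- Let `χ ≤ λ` be two uncountable cardinals and suppose that `χ` is a
`λ`-revision cardinal. Then `χ` is a `λ⁺`-revision cardinal. -/
theorem stmt2 (χ lam : Cardinal.{u}) (hχ : ℵ₀ < χ) (hlam : ℵ₀ < lam) (hχlam : χ ≤ lam)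
    (h : IsRevision χ lam) : IsRevision χ (Order.succ lam) := by
  obtain ⟨σ, hσ, hcov⟩ := h
  obtain ⟨X, ⟨hXsmall, hXcov⟩, hXcard⟩ := exists_family_of_cov_le hcov
  obtain ⟨s, f, hf, hs⟩ := exists_injOn_cover hlam.le
  -- `pull β x` is the pullback to `s β` of `x ⊆ λ`, viewed as a subset of `λ⁺`.
  let pull (β) (x : Set lam.out) : Set (Order.succ lam).out := Subtype.val '' (f β ⁻¹' x)
  let Y : Set (Set (Order.succ lam).out) :=
    range fun p : (Order.succ lam).out × X ↦ pull p.1 p.2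
  refine ⟨σ, hσ, cov_le_of_family (X := Y) ⟨?_, ?_⟩ ?_⟩
  · rintro _ ⟨⟨β, x, hx⟩, rfl⟩
    exact (mk_image_le.trans (mk_preimage_of_injective _ _ (hf β))).trans_lt (hXsmall x hx)
  · intro b hb
    obtain ⟨β, hβ⟩ := hs b (hb.le.trans hχlam)
    have himg : #(f β '' (Subtype.val ⁻¹' b)) < χ :=
      (mk_image_le.trans (mk_preimage_of_injective _ _ Subtype.val_injective)).trans_lt hb
    obtain ⟨Q, hQX, hQ, hbQ⟩ := hXcov _ himg
    refine ⟨pull β '' Q, ?_, mk_image_le.trans_lt hQ, fun a ha ↦ ?_⟩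
    · rintro _ ⟨x, hx, rfl⟩
      exact ⟨(β, ⟨x, hQX hx⟩), rfl⟩
    · obtain ⟨x, hx, hax⟩ := hbQ ⟨⟨a, hβ ha⟩, ha, rfl⟩
      exact ⟨pull β x, mem_image_of_mem _ hx, ⟨a, hβ ha⟩, hax, rfl⟩
  · calc #Y ≤ #((Order.succ lam).out × X) := mk_range_le
      _ = Order.succ lam * #X := by simp
      _ ≤ Order.succ lam * Order.succ lam := by
        gcongr
        exact hXcard.trans (Order.le_succ lam)
      _ = Order.succ lam := mul_eq_self (hlam.le.trans (Order.le_succ lam))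
end

section
/- Let χ be an uncountable cardinal, and let λ be a limit cardinal greater than χ such that cf(λ) ≠ cf(τ), where τ equals χ if χ is a limit cardinal, and the cardinal predecessor of χ otherwise. Let C be the set of all cardinals ν with χ ≤ ν < λ, and let g : C → C be a function with g(ν) ≥ ν for all ν ∈ C. Suppose there exists T ⊆ C with sup T = λ such that χ is a g(ν)-revision cardinal for all ν ∈ T. Then χ is a λ-revision cardinal. -/
/-!
Fix an enumeration of `λ` in order type `λ`, so that every proper initial segment `S_a` has fewer
than `λ` elements. Since `S_a` embeds into `g ν` for cofinally many `ν ∈ T`, the revision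
hypothesis yields families of size at most `λ` handling the small subsets of `S_a`
(`exists_family_of_cov_le`), and the union `X` of these over all `a` has size at most `λ`.

Two points remain, and both rest on the fact that a monotone map from `λ` to the cardinals below
`τ` is bounded below `τ` when `cf λ ≠ cf τ` (`exists_bound_of_cof_ne`).

* The number `σ` of sets allowed must not depend on `a`. If `χ = τ⁺`, take `σ = τ`. If `χ` is
  a limit, the least `σ` that works for `S_a` is monotone in `a`, hence bounded below `χ`.
* A set `b` of size less than `χ` may be unbounded in `λ`, in which case `cf λ ≤ |b|`. Cutting `b`
  along a cofinal set of size `cf λ` covers it by `cf λ · κ` members of `X`, where `κ` bounds the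
  numbers needed for the pieces `b ∩ S_a`. If `χ` is a limit, this is at most
  `max (cf λ) σ < χ`. If `χ = τ⁺`, those numbers are less than `τ` and monotone in `a`, so
  `κ < τ`, while `cf λ ≤ τ` and `cf λ ≠ cf τ` force `cf λ < τ`; so `cf λ · κ < τ`.
-/

open Cardinal Set

universe u

/-- A monotone cofinal map between linear orders preserves cofinality; cofinality of the range is
asked for in strict form, so no separate assumption that there is no maximum is needed. -/
theorem cof_eq_of_monotone_unbounded {A B : Type u} [LinearOrder A] [LinearOrder B] (F : A → B)
    (hF : Monotone F) (hub : ∀ b, ∃ a, b < F a) : Order.cof A = Order.cof B := by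
  apply le_antisymm
  · obtain ⟨D, hD, hDc⟩ := Order.exists_cof_eq B
    choose p hp using hub
    rw [← hDc]
    refine le_trans (Order.cof_le (s := p '' D) ?_) mk_image_le
    intro a
    obtain ⟨d, hd, had⟩ := hD (F a)
    refine ⟨p d, mem_image_of_mem _ hd, ?_⟩
    by_contra hlt
    exact absurd (hF (le_of_lt (not_le.1 hlt))) (not_le.2 (had.trans_lt (hp d)))
  · obtain ⟨D, hD, hDc⟩ := Order.exists_cof_eq A
    rw [← hDc]
    refine le_trans (Order.cof_le (s := F '' D) ?_) mk_image_le
    intro b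
    obtain ⟨a, ha⟩ := hub b
    obtain ⟨d, hd, had⟩ := hD a
    exact ⟨F d, mem_image_of_mem _ hd, ha.le.trans (hF had)⟩

theorem exists_bound_of_cof_ne {A : Type u} [LinearOrder A] {τ : Cardinal.{u}}
    (hcof : Order.cof A ≠ τ.ord.cof) (f : A → Cardinal.{u}) (hf : Monotone f)
    (hlt : ∀ a, f a < τ) : ∃ κ < τ, ∀ a, f a ≤ κ := by
  by_contra! h
  apply hcof
  rw [← Ordinal.cof_toType]
  refine cof_eq_of_monotone_unbounded
    (fun a => Ordinal.ToType.mk ⟨(f a).ord, ord_lt_ord.2 (hlt a)⟩) ?_ ?_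
  · intro a a' haa
    exact Ordinal.ToType.mk.le_iff_le.2 (Subtype.mk_le_mk.2 (ord_le_ord.2 (hf haa)))
  · intro b
    obtain ⟨⟨β, hβ⟩, rfl⟩ := Ordinal.ToType.mk.surjective b
    obtain ⟨a, ha⟩ := h β.card (lt_ord.1 hβ)
    exact ⟨a, Ordinal.ToType.mk.lt_iff_lt.2 (Subtype.mk_lt_mk.2 (lt_ord.2 ha))⟩

theorem exists_family_of_cov_le_s3 {L : Type u} {μ χ σ : Cardinal.{u}} (h : cov μ χ χ σ ≤ μ)
    (S : Set L) (hS : #S ≤ μ) :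
    ∃ X : Set (Set L), #X ≤ μ ∧ (∀ x ∈ X, #x < χ) ∧
      ∀ b ⊆ S, #b < χ → ∃ Q ⊆ X, #Q < σ ∧ b ⊆ ⋃₀ Q := by
  unfold cov at h
  split_ifs at h with hex
  · have hne : {κ | ∃ X, IsCovFamily μ χ χ σ X ∧ #X = κ}.Nonempty :=
      hex.elim fun X hX => ⟨_, X, hX, rfl⟩
    obtain ⟨Y, hY, hYc⟩ := csInf_mem hne
    rw [← hYc] at h
    rw [← mk_out μ] at hS
    obtain ⟨i⟩ := (le_def _ _).1 hS
    -- transport along the embedding `i` of `S` into `μ`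
    let t : Set μ.out → Set L := fun y => Subtype.val '' (i ⁻¹' y)
    refine ⟨t '' Y, mk_image_le.trans h, ?_, ?_⟩
    · rintro _ ⟨y, hy, rfl⟩
      refine lt_of_le_of_lt (mk_image_le.trans ?_) (hY.1 y hy)
      exact mk_preimage_of_injective _ _ i.injective
    · intro b hbS hb
      obtain ⟨Q, hQY, hQ, hbQ⟩ := hY.2 (i '' (Subtype.val ⁻¹' b)) (by
        refine lt_of_le_of_lt (mk_image_le.trans ?_) hb
        exact mk_preimage_of_injective _ _ Subtype.val_injective)
      refine ⟨t '' Q, image_mono hQY, mk_image_le.trans_lt hQ, ?_⟩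
      intro x hx
      obtain ⟨y, hy, hxy⟩ := hbQ (mem_image_of_mem i (show (⟨x, hbS hx⟩ : S) ∈ _ from hx))
      exact ⟨t y, mem_image_of_mem _ hy, ⟨x, hbS hx⟩, hxy, rfl⟩
  · -- without a covering family the value of `cov` is `2 ^ μ`, which exceeds `μ`
    exact absurd h (not_le.2 (cantor μ))

theorem isRevision_of_family {χ lam σ : Cardinal.{u}} (hσ : σ < χ) (X : Set (Set lam.out))
    (hX : IsCovFamily lam χ χ σ X) (hXc : #X ≤ lam) : IsRevision χ lam := by
  refine ⟨σ, hσ, ?_⟩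
  unfold cov
  rw [if_pos ⟨X, hX⟩]
  have hmem : #X ∈ {κ | ∃ X, IsCovFamily lam χ χ σ X ∧ #X = κ} := ⟨X, hX, rfl⟩
  exact (csInf_le' hmem).trans hXc

theorem exists_subset_of_lt_cof {L A : Type u} [LinearOrder A] (e : L → A) (b : Set L)
    (hb : #b < Order.cof A) : ∃ a, b ⊆ {x | e x < a} := by
  have hn : ¬ IsCofinal (e '' b) := fun hc =>
    absurd (Order.cof_le hc) (not_le.2 (mk_image_le.trans_lt hb))
  obtain ⟨a, ha⟩ := not_isCofinal_iff.1 hn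
  exact ⟨a, fun x hx => ha _ (mem_image_of_mem _ hx)⟩

theorem exists_cover_of_pieces {L A : Type u} [LinearOrder A] [NoMaxOrder A] (e : L → A)
    (X : Set (Set L)) (b : Set L) (κ : Cardinal.{u})
    (h : ∀ a, ∃ Q ⊆ X, #Q ≤ κ ∧ b ∩ {x | e x < a} ⊆ ⋃₀ Q) :
    ∃ Q ⊆ X, #Q ≤ Order.cof A * κ ∧ b ⊆ ⋃₀ Q := by
  obtain ⟨C, hC, hCc⟩ := Order.exists_cof_eq A
  choose Q hQX hQ hbQ using h
  refine ⟨⋃ c : C, Q c, iUnion_subset fun c => hQX c, ?_, ?_⟩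
  · rw [← hCc]
    refine (mk_iUnion_le _).trans ?_
    gcongr
    exact ciSup_le' fun c => hQ c
  · intro x hx
    obtain ⟨a, ha⟩ := exists_gt (e x)
    obtain ⟨c, hc, hac⟩ := hC a
    obtain ⟨q, hq, hxq⟩ := hbQ c ⟨hx, ha.trans_le hac⟩
    exact ⟨q, mem_iUnion.2 ⟨⟨c, hc⟩, hq⟩, hxq⟩

/-- If the pieces `b ∩ S_a` are each covered by fewer than `τ` members of `X`, where
`cf A ≠ cf τ`, then a single bound below `τ` works for all of them, because the least number
needed is monotone in `a`. -/
theorem exists_uniform_bound {L A : Type u} [LinearOrder A] {τ : Cardinal.{u}} (e : L → A)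
    (hcof : Order.cof A ≠ τ.ord.cof) (X : Set (Set L)) (b : Set L)
    (h : ∀ a, ∃ Q ⊆ X, #Q < τ ∧ b ∩ {x | e x < a} ⊆ ⋃₀ Q) :
    ∃ κ < τ, ∀ a, ∃ Q ⊆ X, #Q ≤ κ ∧ b ∩ {x | e x < a} ⊆ ⋃₀ Q := by
  let N : A → Set Cardinal.{u} := fun a => {c | ∃ Q ⊆ X, #Q = c ∧ b ∩ {x | e x < a} ⊆ ⋃₀ Q}
  have hN : ∀ a, ∃ c ∈ N a, c < τ := fun a => by
    obtain ⟨Q, hQX, hQ, hb⟩ := h a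
    exact ⟨#Q, ⟨Q, hQX, rfl, hb⟩, hQ⟩
  have hne : ∀ a, (N a).Nonempty := fun a => (hN a).imp fun _ h => h.1
  obtain ⟨κ, hκ, hle⟩ := exists_bound_of_cof_ne hcof (fun a => sInf (N a))
    (fun a a' haa => csInf_le_csInf' (hne a') (by
      rintro c ⟨Q, hQX, hQ, hb⟩
      exact ⟨Q, hQX, hQ, fun x hx => hb ⟨hx.1, lt_of_lt_of_le hx.2 haa⟩⟩))
    (fun a => by
      obtain ⟨c, hc, hcτ⟩ := hN a
      exact (csInf_le' hc).trans_lt hcτ)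
  refine ⟨κ, hκ, fun a => ?_⟩
  obtain ⟨Q, hQX, hQ, hb⟩ := csInf_mem (hne a)
  exact ⟨Q, hQX, hQ.le.trans (hle a), hb⟩

/-- Let `χ` be an uncountable cardinal, `λ` a limit cardinal greater
than `χ` with `cf λ ≠ cf τ`, where `τ` is `χ` if `χ` is a limit cardinal and the
predecessor of `χ` otherwise.  Let `g` map each cardinal `ν` with `χ ≤ ν < λ` to a
cardinal `g ν` with `ν ≤ g ν` and `χ ≤ g ν < λ`.  If there is `T ⊆ [χ, λ)` with
`sup T = λ` such that `χ` is a `g ν`-revision cardinal for all `ν ∈ T`, then `χ` is a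
`λ`-revision cardinal. -/
theorem stmt3 (χ lam τ : Cardinal.{u}) (hχ : ℵ₀ < χ)
    (hτ : χ = Order.succ τ ∨ (IsLimitCard χ ∧ τ = χ))
    (hlam : IsLimitCard lam) (hχlam : χ < lam)
    (hcof : lam.ord.cof ≠ τ.ord.cof)
    (g : Cardinal.{u} → Cardinal.{u})
    (hg : ∀ ν : Cardinal.{u}, χ ≤ ν → ν < lam → (χ ≤ g ν ∧ g ν < lam) ∧ ν ≤ g ν)
    (T : Set Cardinal.{u}) (hT : ∀ ν ∈ T, χ ≤ ν ∧ ν < lam)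
    (hTsup : sSup T = lam)
    (hrev : ∀ ν ∈ T, IsRevision χ (g ν)) :
    IsRevision χ lam := by
  obtain ⟨hlam0, hlamlim⟩ := hlam
  have hTne : T.Nonempty := by
    rw [nonempty_iff_ne_empty]
    rintro rfl
    rw [csSup_empty] at hTsup
    exact absurd hχlam (by rw [← hTsup]; exact not_lt_bot)
  let A : Type u := lam.ord.ToType
  have : NoMaxOrder A := noMaxOrder hlam0
  have hA : Order.cof A = lam.ord.cof := Ordinal.cof_toType _
  have hAcof : Order.cof A ≠ τ.ord.cof := hA ▸ hcof
  have hAc : #A = lam := mk_ord_toType lam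
  have hA0 : ℵ₀ ≤ Order.cof A := by
    have : Nonempty A := by
      rw [← mk_ne_zero_iff, hAc]
      exact (aleph0_pos.trans_le hlam0).ne'
    exact Order.aleph0_le_cof
  obtain ⟨e⟩ : Nonempty (lam.out ≃ A) := Cardinal.eq.1 (by rw [mk_out, hAc])
  have hS : ∀ a : A, #{x | e x < a} < lam := fun a =>
    (mk_preimage_of_injective e (Iio a) e.injective).trans_lt
      ((mk_Iio_lt a (by rw [hAc, Ordinal.type_toType])).trans_eq hAc)
  -- the values of `σ` that work for some `g ν` large enough to accommodate `S_a`
  let R : A → Set Cardinal.{u} := fun a =>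
    {σ | ∃ ν ∈ T, #{x | e x < a} ≤ g ν ∧ cov (g ν) χ χ σ ≤ g ν}
  have hR : ∀ a, ∃ σ ∈ R a, σ < χ := fun a => by
    obtain ⟨ν, hν, haν⟩ := exists_lt_of_lt_csSup hTne ((hS a).trans_eq hTsup.symm)
    obtain ⟨σ, hσ, hcov⟩ := hrev ν hν
    exact ⟨σ, ⟨ν, hν, haν.le.trans (hg ν (hT ν hν).1 (hT ν hν).2).2, hcov⟩, hσ⟩
  have hRanti : ∀ a a', a ≤ a' → R a' ⊆ R a := by
    rintro a a' haa σ ⟨ν, hν, hle, hcov⟩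
    exact ⟨ν, hν, (mk_le_mk_of_subset fun x hx => lt_of_lt_of_le hx haa).trans hle, hcov⟩
  -- a uniform bound `σ₀` on the number of sets needed within an initial segment
  obtain ⟨σ₀, hσχ, hσ₀⟩ : ∃ σ₀ < χ, ∀ a, ∃ σ ∈ R a, σ ≤ σ₀ := by
    rcases hτ with hsucc | ⟨-, rfl⟩
    · refine ⟨τ, hsucc ▸ Order.lt_succ τ, fun a => ?_⟩
      obtain ⟨σ, hσ, hlt⟩ := hR a
      exact ⟨σ, hσ, Order.lt_succ_iff.1 (hsucc ▸ hlt)⟩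
    · have hne : ∀ a, (R a).Nonempty := fun a => (hR a).imp fun _ h => h.1
      obtain ⟨κ, hκ, hle⟩ := exists_bound_of_cof_ne hAcof (fun a => sInf (R a))
        (fun a a' haa => csInf_le_csInf' (hne a') (hRanti a a' haa))
        (fun a => by
          obtain ⟨c, hc, hcτ⟩ := hR a
          exact (csInf_le' hc).trans_lt hcτ)
      exact ⟨κ, hκ, fun a => ⟨_, csInf_mem (hne a), hle a⟩⟩
  have hfam : ∀ a, ∃ X : Set (Set lam.out), #X ≤ lam ∧ (∀ x ∈ X, #x < χ) ∧
      ∀ b ⊆ {x | e x < a}, #b < χ → ∃ Q ⊆ X, #Q < σ₀ ∧ b ⊆ ⋃₀ Q := fun a => by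
    obtain ⟨σ, ⟨ν, hν, hle, hcov⟩, hσ⟩ := hσ₀ a
    obtain ⟨X, hXc, hX, hb⟩ := exists_family_of_cov_le_s3 hcov _ hle
    refine ⟨X, hXc.trans (hg ν (hT ν hν).1 (hT ν hν).2).1.2.le, hX, fun b hbS hbχ => ?_⟩
    obtain ⟨Q, hQX, hQ, hbQ⟩ := hb b hbS hbχ
    exact ⟨Q, hQX, hQ.trans_le hσ, hbQ⟩
  choose X hXc hXχ hXb using hfam
  let Z : Set (Set lam.out) := ⋃ a, X a
  have hZc : #Z ≤ lam := by
    refine (mk_iUnion_le X).trans ?_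
    calc #A * ⨆ a, #(X a) ≤ lam * lam := by
          gcongr
          · exact hAc.le
          · exact ciSup_le' hXc
      _ = lam := mul_eq_self hlam0
  have hZχ : ∀ x ∈ Z, #x < χ := fun x hx => by
    obtain ⟨a, ha⟩ := mem_iUnion.1 hx
    exact hXχ a x ha
  have hZb : ∀ a, ∀ b ⊆ {x | e x < a}, #b < χ → ∃ Q ⊆ Z, #Q < σ₀ ∧ b ⊆ ⋃₀ Q := by
    intro a b hbS hb
    obtain ⟨Q, hQ, h⟩ := hXb a b hbS hb
    exact ⟨Q, hQ.trans (subset_iUnion X a), h⟩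
  have hpiece : ∀ b : Set lam.out, #b < χ → ∀ a,
      ∃ Q ⊆ Z, #Q < σ₀ ∧ b ∩ {x | e x < a} ⊆ ⋃₀ Q := fun b hb a =>
    hZb a _ inter_subset_right ((mk_le_mk_of_subset inter_subset_left).trans_lt hb)
  rcases le_or_gt χ (Order.cof A) with hle | hlt
  · -- every set of size less than `χ` lies in an initial segment
    refine isRevision_of_family hσχ Z ⟨hZχ, fun b hb => ?_⟩ hZc
    obtain ⟨a, ha⟩ := exists_subset_of_lt_cof e b (hb.trans_le hle)
    exact hZb a b ha hb
  · rcases hτ with hsucc | ⟨⟨-, hlim⟩, rfl⟩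
    · have hτχ : τ < χ := hsucc ▸ Order.lt_succ τ
      have hσ₀τ : σ₀ ≤ τ := Order.lt_succ_iff.1 (hsucc ▸ hσχ)
      have hleτ : Order.cof A ≤ τ := Order.lt_succ_iff.1 (hsucc ▸ hlt)
      -- `cf λ` is regular, so `cf λ = τ` would give `cf τ = τ = cf λ`
      have hltτ : Order.cof A < τ := lt_of_le_of_ne hleτ fun h => hcof (by
        rw [← h, hA, Ordinal.cof_ord_cof])
      refine isRevision_of_family hτχ Z ⟨hZχ, fun b hb => ?_⟩ hZc
      obtain ⟨κ, hκ, hcover⟩ := exists_uniform_bound e hAcof Z b fun a => by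
        obtain ⟨Q, hQZ, hQ, hbQ⟩ := hpiece b hb a
        exact ⟨Q, hQZ, hQ.trans_le hσ₀τ, hbQ⟩
      obtain ⟨Q, hQZ, hQ, hbQ⟩ := exists_cover_of_pieces e Z b κ hcover
      exact ⟨Q, hQZ, hQ.trans_lt (mul_lt_of_lt (hA0.trans hleτ) hltτ hκ), hbQ⟩
    · have hmax : Order.succ (max (Order.cof A) σ₀) < τ :=
        lt_of_le_of_ne (Order.succ_le_of_lt (max_lt hlt hσχ)) (hlim _).symm
      refine isRevision_of_family hmax Z ⟨hZχ, fun b hb => ?_⟩ hZc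
      obtain ⟨Q, hQZ, hQ, hbQ⟩ := exists_cover_of_pieces e Z b σ₀ fun a => by
        obtain ⟨Q, hQZ, hQ, hbQ⟩ := hpiece b hb a
        exact ⟨Q, hQZ, hQ.le, hbQ⟩
      exact ⟨Q, hQZ, Order.lt_succ_iff.2 (hQ.trans (mul_le_max_of_aleph0_le_left hA0)), hbQ⟩
end

section
/- Let χ be an uncountable cardinal, and let τ equal χ if χ is a limit cardinal, and the cardinal predecessor of χ otherwise. Then χ is a λ-revision cardinal for every cardinal λ with χ ≤ λ < χ^{+cf(τ)}; equivalently, for every ordinal β < cf(τ), χ is a λ-revision cardinal where λ is the β-th successor cardinal of χ. -/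
/-!
Write `χ = ℵ_α` and `λ = ℵ_(α+β)`. The proof picks a regular cardinal `σ < χ` with `|β| < σ` such
that either `χ` is regular or `cf χ < σ`:
* `σ = cf τ` if `χ = τ⁺` (then `χ` is regular);
* `σ = max(|β|, ℵ₀)⁺` if `χ` is a regular limit;
* `σ = (cf χ)⁺` if `χ` is singular.

With such a `σ`, one shows by strong induction on `κ ≤ λ` that for every set `s` of size at most `κ`
there is a family of at most `κ` sets, each of size `< χ`, such that each `b ⊆ s` of size `< χ` is
covered by fewer than `σ` of them. If `κ < χ`, the family `{s}` does. Otherwise enumerate `s` in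
order type at most `κ`, and take the union of the families obtained for the proper initial segments
of `s` (`Covered.step`). If `cf κ ≥ χ`, any relevant `b` lies in one initial segment. If
`cf κ < σ`, then `s` is a union of fewer than `σ` initial segments, and regularity of `σ` bounds the
number of sets used. One of the two always holds (`cof_dichotomy`): a singular `κ = ℵ_(α+δ)` with
`0 < δ ≤ β` has `δ` limit and `cf κ = cf δ ≤ |β| < σ`, and for `δ = 0` this is the choice of `σ`.
-/

open Cardinal Set

universe u

/-- Relative version of the covering property: at most `κ` sets of size `< χ` suffice to cover each
subset of `s` of size `< χ` by fewer than `σ` of them. The members of the family need not be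
subsets of `s`. -/
def Covered {T : Type u} (χ σ κ : Cardinal.{u}) (s : Set T) : Prop :=
  ∃ X : Set (Set T), #X ≤ κ ∧ (∀ x ∈ X, #x < χ) ∧
    ∀ b : Set T, b ⊆ s → #b < χ → ∃ Q : Set (Set T), Q ⊆ X ∧ #Q < σ ∧ b ⊆ ⋃₀ Q

/-- A set of size at most `κ` is filtered by its initial segments (of size `< κ`) in an enumeration
of order type at most `κ`: small subsets lie in one segment, and `cf κ` segments exhaust the set. -/
lemma exists_filtration {T : Type u} {κ : Cardinal.{u}} (hκ : ℵ₀ ≤ κ) (s : Set T) (hs : #s ≤ κ) :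
    ∃ A : κ.ord.ToType → Set T, (∀ i, #(A i) < κ) ∧
      (∀ b ⊆ s, #b < κ.ord.cof → ∃ i, b ⊆ A i) ∧
      ∃ D : Set κ.ord.ToType, #D = κ.ord.cof ∧ s ⊆ ⋃ i ∈ D, A i := by
  have hle : #s ≤ #κ.ord.ToType := by rwa [mk_ord_toType]
  obtain ⟨f⟩ := hle
  refine ⟨fun i => Subtype.val '' (f ⁻¹' Iic i), fun i => ?_, fun b hb hbc => ?_, ?_⟩
  · refine mk_image_le.trans_lt ((mk_preimage_of_injective _ _ f.injective).trans_lt ?_)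
    rw [← Iio_insert]
    have hlt : #(Iio i) < κ := by simpa using mk_Iio_lt i (by simp)
    exact (mk_insert_le).trans_lt
      (add_lt_of_lt hκ hlt (one_lt_aleph0.trans_le hκ))
  · have hnc : ¬ IsCofinal (f '' (Subtype.val ⁻¹' b)) := fun hc => by
      have h := Order.cof_le hc
      rw [Ordinal.cof_toType] at h
      exact (h.trans (mk_image_le.trans
        (mk_preimage_of_injective _ _ Subtype.val_injective))).not_gt hbc
    simp only [IsCofinal, not_forall, not_exists, not_and] at hnc
    obtain ⟨i, hi⟩ := hnc
    refine ⟨i, fun x hx => ⟨⟨x, hb hx⟩, ?_, rfl⟩⟩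
    exact (not_le.1 (hi _ ⟨⟨x, hb hx⟩, hx, rfl⟩)).le
  · obtain ⟨D, hD, hDc⟩ := Order.exists_cof_eq κ.ord.ToType
    refine ⟨D, by rw [hDc, Ordinal.cof_toType], fun x hx => ?_⟩
    obtain ⟨i, hi, hxi⟩ := hD (f ⟨x, hx⟩)
    exact mem_biUnion hi ⟨⟨x, hx⟩, hxi, rfl⟩

/-- The induction step: if `κ` has cofinality at least `χ` or less than `σ`, the covering property
passes from sets of size `< κ` to sets of size `κ`. -/
lemma Covered.step {T : Type u} {χ σ κ : Cardinal.{u}} (hσ : σ.IsRegular) (hκ : ℵ₀ ≤ κ)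
    (hcof : χ ≤ κ.ord.cof ∨ κ.ord.cof < σ)
    (ih : ∀ t : Set T, #t < κ → Covered χ σ κ t) (s : Set T) (hs : #s ≤ κ) :
    Covered χ σ κ s := by
  obtain ⟨A, hA, hb, D, hD, hsD⟩ := exists_filtration hκ s hs
  choose X hXc hXs hX using fun i => ih (A i) (hA i)
  refine ⟨⋃ i, X i, ?_, ?_, fun b hbs hbχ => ?_⟩
  · refine (mk_iUnion_le _).trans ((mul_le_mul' (mk_ord_toType κ).le
      (ciSup_le' hXc)).trans (mul_eq_self hκ).le)
  · intro x hx
    obtain ⟨i, hi⟩ := mem_iUnion.1 hx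
    exact hXs i x hi
  · rcases hcof with hc | hc
    · obtain ⟨i, hi⟩ := hb b hbs (hbχ.trans_le hc)
      obtain ⟨Q, hQX, hQ⟩ := hX i b hi hbχ
      exact ⟨Q, hQX.trans (subset_iUnion X i), hQ⟩
    · choose Q hQX hQσ hQ using fun i => hX i (b ∩ A i) inter_subset_right
        ((mk_le_mk_of_subset inter_subset_left).trans_lt hbχ)
      refine ⟨⋃ i ∈ D, Q i, ?_, ?_, fun x hx => ?_⟩
      · exact iUnion₂_subset fun i _ => (hQX i).trans (subset_iUnion X i)
      · exact (card_biUnion_lt_iff_forall_of_isRegular hσ (hD.trans_lt hc)).2 fun i _ => hQσ i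
      · obtain ⟨i, hi, hxi⟩ := mem_iUnion₂.1 (hsD (hbs hx))
        obtain ⟨q, hq, hxq⟩ := hQ i ⟨hx, hxi⟩
        exact ⟨q, mem_biUnion hi hq, hxq⟩

lemma cof_dichotomy {σ κ : Cardinal.{u}} {α β : Ordinal.{u}} (hβ : β.card < σ)
    (hα : (ℵ_ α).IsRegular ∨ (ℵ_ α).ord.cof < σ) (h₁ : ℵ_ α ≤ κ) (h₂ : κ ≤ ℵ_ (α + β)) :
    ℵ_ α ≤ κ.ord.cof ∨ κ.ord.cof < σ := by
  have hκ : ℵ₀ ≤ κ := (aleph0_le_aleph α).trans h₁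
  rcases isRegular_or_isSingular hκ with hr | hsing
  · left
    rwa [hr.cof_ord]
  obtain ⟨γ, rfl⟩ := (mem_range_aleph_iff.2 hκ : κ ∈ range aleph)
  rw [aleph_le_aleph] at h₁ h₂
  obtain ⟨δ, rfl⟩ := exists_add_of_le h₁
  rw [add_le_add_iff_left] at h₂
  rcases eq_or_ne δ 0 with rfl | hδ
  · rw [add_zero] at hsing ⊢
    exact Or.inr (hα.resolve_left hsing.not_isRegular)
  · right
    rw [ord_aleph, Ordinal.cof_omega hsing.isSuccLimit_of_aleph, Ordinal.cof_add _ hδ]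
    exact ((Ordinal.cof_le_card δ).trans (Ordinal.card_le_card h₂)).trans_lt hβ

lemma covered_of_le {T : Type u} {σ : Cardinal.{u}} {α β : Ordinal.{u}} (hσ : σ.IsRegular)
    (hβ : β.card < σ) (hα : (ℵ_ α).IsRegular ∨ (ℵ_ α).ord.cof < σ) (κ : Cardinal.{u})
    (hκ : ℵ_ α ≤ κ) (hκβ : κ ≤ ℵ_ (α + β)) (s : Set T) (hs : #s ≤ κ) :
    Covered (ℵ_ α) σ κ s := by
  induction κ using WellFoundedLT.induction generalizing s with
  | ind κ ih =>
  have hκ₀ : ℵ₀ ≤ κ := (aleph0_le_aleph α).trans hκ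
  refine Covered.step hσ hκ₀ (cof_dichotomy hβ hα hκ hκβ) (fun t ht => ?_) s hs
  rcases lt_or_ge #t (ℵ_ α) with h | h
  · refine ⟨{t}, ?_, ?_, fun b hb _ => ⟨{t}, subset_rfl, ?_, by simpa using hb⟩⟩
    · simpa using one_le_aleph0.trans hκ₀
    · simpa using h
    · simpa using one_lt_aleph0.trans_le hσ.aleph0_le
  · obtain ⟨X, hX, hX'⟩ := ih #t ht h (ht.le.trans hκβ) t le_rfl
    exact ⟨X, hX.trans ht.le, hX'⟩

lemma isRevision_of_isRegular {σ : Cardinal.{u}} {α β : Ordinal.{u}} (hσ : σ.IsRegular)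
    (hσα : σ < ℵ_ α) (hβ : β.card < σ) (hα : (ℵ_ α).IsRegular ∨ (ℵ_ α).ord.cof < σ) :
    IsRevision (ℵ_ α) (ℵ_ (α + β)) := by
  refine ⟨σ, hσα, ?_⟩
  obtain ⟨X, hXc, hXs, hX⟩ := covered_of_le (T := (ℵ_ (α + β)).out) hσ hβ hα (ℵ_ (α + β))
    (aleph_le_aleph.2 le_self_add) le_rfl univ (by simp)
  have hfam : IsCovFamily (ℵ_ (α + β)) (ℵ_ α) (ℵ_ α) σ X :=
    ⟨hXs, fun b hb => hX b (subset_univ b) hb⟩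
  rw [cov, if_pos ⟨X, hfam⟩]
  have hmem : #X ∈ {κ | ∃ Y, IsCovFamily (ℵ_ (α + β)) (ℵ_ α) (ℵ_ α) σ Y ∧ #Y = κ} :=
    ⟨X, hfam, rfl⟩
  exact (csInf_le' hmem).trans hXc

/-- Let `χ` be an uncountable cardinal, and let `τ` equal `χ` if `χ`
is a limit cardinal, and the predecessor of `χ` otherwise. Then `χ` is a `λ`-revision
cardinal for every cardinal `λ` with `χ ≤ λ < χ^{+cf τ}`; that is, writing `χ = ℵ_α`,
for every ordinal `β < cf τ`, `χ` is an `ℵ_{α+β}`-revision cardinal (`ℵ_{α+β}` being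
the `β`-th successor cardinal of `χ`). -/
theorem stmt4 (χ τ : Cardinal.{u}) (hχ : ℵ₀ < χ)
    (hτ : χ = Order.succ τ ∨ (IsLimitCard χ ∧ τ = χ)) :
    ∀ α : Ordinal.{u}, χ = Cardinal.aleph α →
      ∀ β : Ordinal.{u}, β < (τ.ord.cof).ord →
        IsRevision χ (Cardinal.aleph (α + β)) := by
  rintro α rfl β hβ
  rw [lt_ord] at hβ
  rcases hτ with hτ | ⟨⟨-, hlim⟩, rfl⟩
  · have hτ₀ : ℵ₀ ≤ τ := by rwa [hτ, Order.lt_succ_iff] at hχ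
    refine isRevision_of_isRegular (isRegular_cof (isSuccLimit_ord hτ₀)) ?_ hβ
      (Or.inl (hτ ▸ isRegular_succ hτ₀))
    rw [hτ, Order.lt_succ_iff]
    exact Ordinal.cof_ord_le τ
  · have hsucc : ∀ μ < ℵ_ α, Order.succ μ < ℵ_ α := fun μ hμ =>
      (Order.succ_le_of_lt hμ).lt_of_ne (hlim μ).symm
    rcases isRegular_or_isSingular hχ.le with hr | hsing
    · rw [hr.cof_ord] at hβ
      exact isRevision_of_isRegular (isRegular_succ (le_max_right β.card ℵ₀))
        (hsucc _ (max_lt hβ hχ)) (Order.lt_succ_of_le (le_max_left _ _)) (Or.inl hr)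
    · have hcof : ℵ₀ ≤ (ℵ_ α).ord.cof :=
        Ordinal.aleph0_le_cof_iff.2 (Ordinal.one_lt_cof_iff.2 (isSuccLimit_ord hχ.le))
      exact isRevision_of_isRegular (isRegular_succ hcof) (hsucc _ hsing.cof_ord_lt)
        (hβ.trans (Order.lt_succ _)) (Or.inr (Order.lt_succ _))
end

section
/- Let χ be a limit cardinal and let λ be a cardinal greater than or equal to χ. Then cov(λ, χ⁺, χ⁺, χ) = cov(λ, χ⁺, χ⁺, σ) for some cardinal σ < χ. -/
/-!
The key point is that a single family `X` witnessing `cov (λ, χ⁺, χ⁺, χ)` already witnesses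
`cov (λ, χ⁺, χ⁺, σ)` for some `σ < χ` (`IsCovFamily.exists_lt`). Otherwise, for each `σ < χ` there
is a set `b_σ` of size at most `χ` that is not covered by fewer than `σ` members of `X`. The union
of all the `b_σ` still has size at most `χ`, so it is covered by some `Q ⊆ X` with `#Q < χ`. As `χ`
is a limit cardinal, `(#Q)⁺ < χ`, and `Q` covers `b_σ` for `σ = (#Q)⁺`, a contradiction.
Applying this to an `X` of least cardinality gives one inequality; the other is monotonicity of
covering families in the last parameter.
-/

open Cardinal Set

universe u

theorem IsCovFamily.mono {ρ₁ ρ₂ ρ₃ σ τ : Cardinal.{u}} {X : Set (Set ρ₁.out)} (hστ : σ ≤ τ)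
    (h : IsCovFamily ρ₁ ρ₂ ρ₃ σ X) : IsCovFamily ρ₁ ρ₂ ρ₃ τ X := by
  refine ⟨h.1, fun b hb => ?_⟩
  obtain ⟨Q, hQX, hQ, hbQ⟩ := h.2 b hb
  exact ⟨Q, hQX, hQ.trans_le hστ, hbQ⟩

theorem IsLimitCard.succ_lt {χ σ : Cardinal.{u}} (hχ : IsLimitCard χ) (h : σ < χ) :
    Order.succ σ < χ :=
  lt_of_le_of_ne (Order.succ_le_of_lt h) (hχ.2 σ).symm

/-- The union of the sets `b σ`, for `σ < χ`, has size at most `χ` if each of them does, because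
there are at most `χ` cardinals below `χ`. -/
theorem mk_biUnion_cardinal_lt_le {α : Type u} {χ : Cardinal.{u}} (hχ : ℵ₀ ≤ χ)
    (b : Cardinal.{u} → Set α) (hb : ∀ σ < χ, #(b σ) ≤ χ) :
    #(⋃ σ ∈ Set.Iio χ, b σ : Set α) ≤ χ := by
  -- Reindexing by `χ.ord.ToType` keeps the index type in the universe `u`.
  have hwo : IsWellOrder χ.ord.ToType (· < ·) := inferInstance
  have hsub : (⋃ σ ∈ Set.Iio χ, b σ) ⊆
      ⋃ i : χ.ord.ToType, b (Ordinal.typein (· < ·) i).card := by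
    intro x hx
    simp only [Set.mem_iUnion] at hx ⊢
    obtain ⟨σ, hσ, hx⟩ := hx
    have hlt : σ.ord < Ordinal.type (α := χ.ord.ToType) (· < ·) := by
      simpa using hσ
    refine ⟨Ordinal.enum (· < ·) ⟨σ.ord, hlt⟩, ?_⟩
    rwa [Ordinal.typein_enum, Cardinal.card_ord]
  refine (mk_le_mk_of_subset hsub).trans ((mk_iUnion_le _).trans ?_)
  have hidx : #χ.ord.ToType = χ := by simp
  rw [hidx]
  refine (mul_le_mul_right (ciSup_le' fun i => hb _ ?_) χ).trans (mul_eq_self hχ).le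
  exact Cardinal.lt_ord.1 (Ordinal.typein_lt_self i)

/-- A family covering every set of size at most `χ` by fewer than `χ` members does so with a uniform
bound `σ < χ` on the number of members. -/
theorem IsCovFamily.exists_lt {χ lam : Cardinal.{u}} (hχ : IsLimitCard χ) {X : Set (Set lam.out)}
    (h : IsCovFamily lam (Order.succ χ) (Order.succ χ) χ X) :
    ∃ σ < χ, IsCovFamily lam (Order.succ χ) (Order.succ χ) σ X := by
  by_contra! hcon
  have hbad : ∀ σ : Cardinal.{u}, ∃ b : Set lam.out, σ < χ → #b ≤ χ ∧
      ∀ Q : Set (Set lam.out), Q ⊆ X → #Q < σ → ¬ b ⊆ ⋃₀ Q := by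
    intro σ
    by_cases hσ : σ < χ
    · by_contra! hno
      refine hcon σ hσ ⟨h.1, fun b hb => ?_⟩
      obtain ⟨-, hb'⟩ := hno b
      exact hb' (Order.lt_succ_iff.1 hb)
    · exact ⟨∅, fun h => absurd h hσ⟩
  choose b hb using hbad
  obtain ⟨Q, hQX, hQ, hbQ⟩ := h.2 (⋃ σ ∈ Set.Iio χ, b σ)
    (Order.lt_succ_iff.2 (mk_biUnion_cardinal_lt_le hχ.1 b fun σ hσ => (hb σ hσ).1))
  have hs := hχ.succ_lt hQ
  exact (hb _ hs).2 Q hQX (Order.lt_succ _)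
    ((Set.subset_biUnion_of_mem (u := b) (Set.mem_Iio.2 hs)).trans hbQ)

/-- All sets of size at most `χ` form a covering family, each covering itself. -/
theorem exists_isCovFamily {χ lam : Cardinal.{u}} (hχ : IsLimitCard χ) :
    ∃ X, IsCovFamily lam (Order.succ χ) (Order.succ χ) χ X := by
  refine ⟨{x | #x < Order.succ χ}, fun x hx => hx, fun b hb => ⟨{b}, by simpa using hb, ?_, ?_⟩⟩
  · rw [mk_singleton]
    exact one_lt_aleph0.trans_le hχ.1
  · simp

/-- Let `χ` be a limit cardinal and `λ ≥ χ` a cardinal. Then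
`cov (λ, χ⁺, χ⁺, χ) = cov (λ, χ⁺, χ⁺, σ)` for some cardinal `σ < χ`. -/
theorem stmt6 (χ lam : Cardinal.{u}) (hχ : IsLimitCard χ) (hχlam : χ ≤ lam) :
    ∃ σ < χ, cov lam (Order.succ χ) (Order.succ χ) χ
      = cov lam (Order.succ χ) (Order.succ χ) σ := by
  have hex := exists_isCovFamily (lam := lam) hχ
  have hne : {κ | ∃ X, IsCovFamily lam (Order.succ χ) (Order.succ χ) χ X ∧ #X = κ}.Nonempty :=
    hex.elim fun X hX => ⟨_, X, hX, rfl⟩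
  obtain ⟨X, hX, hXc⟩ := csInf_mem hne
  obtain ⟨σ, hσ, hXσ⟩ := hX.exists_lt hχ
  refine ⟨σ, hσ, ?_⟩
  unfold cov
  rw [if_pos hex, if_pos ⟨X, hXσ⟩]
  apply le_antisymm
  · refine csInf_le_csInf' ⟨_, X, hXσ, rfl⟩ ?_
    rintro κ ⟨Y, hY, rfl⟩
    exact ⟨Y, hY.mono hσ.le, rfl⟩
  · rw [← hXc]
    exact csInf_le' ⟨X, hXσ, rfl⟩
end

section
/- Let χ and λ be cardinals with cf(χ) < χ < λ (so χ is singular). Then χ is a λ-revision cardinal if and only if χ⁺ is a λ-revision cardinal. -/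
/-!
The point is that a set of size at most the singular cardinal `χ` is a union of fewer than `χ`
sets of size less than `χ` (`exists_small_pieces`).

From `χ` to `χ⁺`, the same family works: cut a set of size at most `χ` into `cf χ` small pieces and
cover each piece by fewer than `σ` members; this uses fewer than `χ` members in total.

From `χ⁺` to `χ`, let `Y` cover every set of size at most `χ` by fewer than `χ` of its members.
The number of members needed is bounded by a single `c < χ` (`exists_uniform_bound`): otherwise,
for each of `cf χ` cardinals cofinal in `χ`, some set of size at most `χ` needs more members than
that cardinal, and the union of these bad sets cannot be covered by fewer than `χ` members.
The small pieces of the members of `Y` then form the required family, with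
at most `c * cf χ < χ` pieces needed for each set.
-/


open Cardinal Set

universe u

/-- Since `2 ^ λ > λ`, the junk value of `cov` never interferes with the bound `cov … ≤ λ`. -/
theorem cov_le_iff (lam ρ₂ ρ₃ ρ₄ : Cardinal.{u}) :
    cov lam ρ₂ ρ₃ ρ₄ ≤ lam ↔ ∃ X, IsCovFamily lam ρ₂ ρ₃ ρ₄ X ∧ #X ≤ lam := by
  unfold cov
  constructor
  · intro h
    split_ifs at h with hX
    · have hne : {κ | ∃ X, IsCovFamily lam ρ₂ ρ₃ ρ₄ X ∧ #X = κ}.Nonempty := by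
        obtain ⟨X, hX⟩ := hX
        exact ⟨_, X, hX, rfl⟩
      obtain ⟨X, hX, hc⟩ := csInf_mem hne
      exact ⟨X, hX, hc.trans_le h⟩
    · exact absurd h (not_le.2 (cantor lam))
  · rintro ⟨X, hX, hc⟩
    rw [if_pos ⟨X, hX⟩]
    have hmem : #X ∈ {κ | ∃ X, IsCovFamily lam ρ₂ ρ₃ ρ₄ X ∧ #X = κ} := ⟨X, hX, rfl⟩
    exact (csInf_le' hmem).trans hc

theorem mk_iUnion_le_mul {α ι : Type u} (f : ι → Set α) (c : Cardinal.{u})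
    (h : ∀ i, #(f i) ≤ c) : #(⋃ i, f i) ≤ #ι * c :=
  (mk_iUnion_le f).trans (mul_le_mul' le_rfl (ciSup_le' h))

theorem exists_small_pieces {χ : Cardinal.{u}} (hχ : ℵ₀ ≤ χ) (hsing : χ.ord.cof < χ) :
    ∃ ι : Type u, #ι < χ ∧ ∀ {α : Type u} (b : Set α), #b ≤ χ →
      ∃ f : ι → Set α, (∀ i, #(f i) < χ) ∧ b = ⋃ i, f i := by
  obtain ⟨S, hS, hcard⟩ := Order.exists_cof_eq χ.ord.ToType
  rw [Ordinal.cof_toType] at hcard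
  refine ⟨S, hcard.trans_lt hsing, fun {α} b hb ↦ ?_⟩
  rw [← mk_ord_toType χ] at hb
  obtain ⟨g⟩ := hb
  refine ⟨fun s ↦ Subtype.val '' (g ⁻¹' Iic s.1), fun s ↦ ?_, ?_⟩
  · refine (mk_image_le.trans (mk_preimage_of_injective _ _ g.injective)).trans_lt ?_
    rw [← Iio_insert]
    have hIio : #(Iio s.1) < χ := by
      simpa using mk_Iio_lt s.1 (by simp)
    exact mk_insert_le.trans_lt (add_lt_of_lt hχ hIio (one_lt_aleph0.trans_le hχ))
  · ext x
    simp only [mem_iUnion, mem_image, mem_preimage, mem_Iic]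
    constructor
    · intro hx
      obtain ⟨s, hs, hle⟩ := hS (g ⟨x, hx⟩)
      exact ⟨⟨s, hs⟩, ⟨x, hx⟩, hle, rfl⟩
    · rintro ⟨s, y, -, rfl⟩
      exact y.2

theorem exists_cofinal_cardinals {χ : Cardinal.{u}} (hsing : χ.ord.cof < χ) :
    ∃ (ι : Type u) (c : ι → Cardinal.{u}), #ι < χ ∧ (∀ i, c i < χ) ∧
      ∀ τ < χ, ∃ i, τ ≤ c i := by
  obtain ⟨S, hS, hcard⟩ := Order.exists_cof_eq χ.ord.ToType
  rw [Ordinal.cof_toType] at hcard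
  refine ⟨S, fun s ↦ (Ordinal.ToType.toOrd s.1 : Ordinal).card, hcard.trans_lt hsing,
    fun s ↦ ?_, fun τ hτ ↦ ?_⟩
  · exact lt_ord.1 (Ordinal.ToType.toOrd s.1).2
  · obtain ⟨s, hs, hle⟩ := hS (Ordinal.ToType.mk ⟨τ.ord, ord_lt_ord.2 hτ⟩)
    refine ⟨⟨s, hs⟩, ord_le.1 ?_⟩
    exact (OrderIso.le_symm_apply _).2 hle

/-- If every set of size at most `χ` is covered by fewer than `χ` members of `Y`, then the number
of members used can be bounded by one cardinal below `χ`, because `χ` is singular. -/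
theorem exists_uniform_bound_s7 {χ : Cardinal.{u}} (hχ : ℵ₀ ≤ χ) (hsing : χ.ord.cof < χ)
    {α : Type u} (Y : Set (Set α))
    (hY : ∀ b : Set α, #b ≤ χ → ∃ Q ⊆ Y, #Q < χ ∧ b ⊆ ⋃₀ Q) :
    ∃ c < χ, ∀ b : Set α, #b ≤ χ → ∃ Q ⊆ Y, #Q ≤ c ∧ b ⊆ ⋃₀ Q := by
  by_contra! hcon
  obtain ⟨ι, c, hι, hc, hcof⟩ := exists_cofinal_cardinals hsing
  choose b hb hbad using fun i ↦ hcon (c i) (hc i)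
  have hU : #(⋃ i, b i) ≤ χ :=
    (mk_iUnion_le_mul b χ hb).trans (mul_le_of_le hχ hι.le le_rfl)
  obtain ⟨Q, hQY, hQ, hcov⟩ := hY _ hU
  obtain ⟨i, hi⟩ := hcof _ hQ
  exact hbad i Q hQY hi ((subset_iUnion b i).trans hcov)

/-- Let `χ < λ` be cardinals with `cf χ < χ` (so `χ` is singular).
Then `χ` is a `λ`-revision cardinal iff `χ⁺` is a `λ`-revision cardinal. -/
theorem stmt7 (χ lam : Cardinal.{u}) (hχ : ℵ₀ ≤ χ) (hsing : χ.ord.cof < χ)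
    (hχlam : χ < lam) :
    IsRevision χ lam ↔ IsRevision (Order.succ χ) lam := by
  obtain ⟨ι, hι, hpieces⟩ := exists_small_pieces hχ hsing
  simp only [IsRevision, cov_le_iff]
  constructor
  · rintro ⟨σ, hσ, X, ⟨hX, hcov⟩, hcard⟩
    refine ⟨χ, Order.lt_succ χ, X, ⟨fun x hx ↦ (hX x hx).trans (Order.lt_succ χ),
      fun b hb ↦ ?_⟩, hcard⟩
    obtain ⟨f, hf, rfl⟩ := hpieces b (Order.lt_succ_iff.1 hb)
    choose Q hQX hQ hfQ using fun i ↦ hcov (f i) (hf i)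
    refine ⟨⋃ i, Q i, iUnion_subset hQX, ?_, ?_⟩
    · exact (mk_iUnion_le_mul Q σ fun i ↦ (hQ i).le).trans_lt (mul_lt_of_lt hχ hι hσ)
    · exact iUnion_subset fun i ↦ (hfQ i).trans (sUnion_subset_sUnion (subset_iUnion Q i))
  · rintro ⟨σ, hσ, Y, ⟨hY, hcov⟩, hcard⟩
    have hσχ : σ ≤ χ := Order.lt_succ_iff.1 hσ
    obtain ⟨c, hc, hbound⟩ := exists_uniform_bound_s7 hχ hsing Y fun b hb ↦ by
      obtain ⟨Q, hQY, hQ, hbQ⟩ := hcov b (Order.lt_succ_iff.2 hb)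
      exact ⟨Q, hQY, hQ.trans_le hσχ, hbQ⟩
    choose f hf hfy using fun y : Y ↦ hpieces y.1 (Order.lt_succ_iff.1 (hY y.1 y.2))
    have hcι : #ι * c < χ := mul_lt_of_lt hχ hι hc
    -- A singular cardinal is a limit cardinal, which leaves room for the strict bound in `cov`.
    have hlim : Order.succ (#ι * c) < χ :=
      (IsSingular.mk hχ hsing.ne).isSuccLimit.succ_lt hcι
    refine ⟨_, hlim, ⋃ i, range fun y ↦ f y i, ⟨?_, fun b hb ↦ ?_⟩, ?_⟩
    · intro x hx
      obtain ⟨i, y, rfl⟩ := mem_iUnion.1 hx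
      exact hf y i
    · obtain ⟨Q, hQY, hQ, hbQ⟩ := hbound b hb.le
      refine ⟨⋃ i, range fun q : Q ↦ f ⟨q.1, hQY q.2⟩ i, ?_, ?_, ?_⟩
      · refine iUnion_mono fun i ↦ ?_
        rintro _ ⟨q, rfl⟩
        exact ⟨⟨q.1, hQY q.2⟩, rfl⟩
      · exact Order.lt_succ_iff.2 (mk_iUnion_le_mul _ c fun i ↦ mk_range_le.trans hQ)
      · intro x hx
        obtain ⟨q, hq, hxq⟩ := hbQ hx
        have hx' : x ∈ ⋃ i, f ⟨q, hQY hq⟩ i := by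
          rw [← hfy]
          exact hxq
        obtain ⟨i, hi⟩ := mem_iUnion.1 hx'
        exact ⟨_, mem_iUnion.2 ⟨i, ⟨q, hq⟩, rfl⟩, hi⟩
    · exact (mk_iUnion_le_mul _ lam fun i ↦ mk_range_le.trans hcard).trans
        (mul_le_of_le (hχ.trans hχlam.le) (hι.trans hχlam).le le_rfl)
end

section
/- Let χ be a weakly inaccessible cardinal (an uncountable regular limit cardinal) and let λ be a cardinal greater than χ. If χ⁺ is a λ-revision cardinal, then χ is a λ-revision cardinal. -/
/-!
Let `X` be a family of at most `λ` sets of size `≤ χ` such that every set of size `≤ χ` is covered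
by fewer than `χ` members of `X`. Write every `x ∈ X` as an increasing union of `χ` pieces of size
`< χ` (the initial segments of an enumeration of `x` in type at most `χ`), and let `Y` be the family
of all these pieces, so that `#Y ≤ λ * χ = λ`. As `χ` is regular, any `b ⊆ x` with `#b < χ` lies in
one piece of `x` (`exists_small_pieces`). Hence if `b` has size `< χ` and is covered by `Q ⊆ X`,
then it is covered by at most `#Q` members of `Y`.

It remains to bound the number of pieces uniformly below `χ`. Otherwise, for every `σ < χ` there is
a `b σ` of size `< χ` that is not covered by fewer than `σ` members of `Y`. The union of all `b σ`
has size `≤ χ`, so it is covered by some `Q ⊆ X` with `#Q < χ`. Since `χ` is a limit cardinal,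
`σ = (#Q)⁺` is below `χ`, and `b σ ⊆ ⋃₀ Q` is covered by fewer than `σ` members of `Y`, a
contradiction.
-/

open Cardinal Set

universe u

/-- Since `ρ₁ < 2 ^ ρ₁`, the default value of `cov` is never `≤ ρ₁`, so `cov ≤ ρ₁` yields an actual
covering family. -/
lemma cov_le_iff_exists_family {ρ₁ ρ₂ ρ₃ ρ₄ : Cardinal.{u}} :
    cov ρ₁ ρ₂ ρ₃ ρ₄ ≤ ρ₁ ↔ ∃ X, IsCovFamily ρ₁ ρ₂ ρ₃ ρ₄ X ∧ #X ≤ ρ₁ := by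
  unfold cov
  split_ifs with hex
  · constructor
    · intro h
      have hne : {κ | ∃ X, IsCovFamily ρ₁ ρ₂ ρ₃ ρ₄ X ∧ #X = κ}.Nonempty := by
        obtain ⟨X, hX⟩ := hex
        exact ⟨_, X, hX, rfl⟩
      obtain ⟨X, hX, hcard⟩ := csInf_mem hne
      exact ⟨X, hX, hcard.le.trans h⟩
    · rintro ⟨X, hX, hcard⟩
      refine le_trans (csInf_le' ?_) hcard
      exact ⟨X, hX, rfl⟩
  · constructor
    · intro h
      exact absurd h (cantor ρ₁).not_ge
    · rintro ⟨X, hX, -⟩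
      exact absurd ⟨X, hX⟩ hex

/-- If `x` has size at most a regular cardinal `χ`, then there are `χ` many sets of size `< χ` such
that each subset of `x` of size `< χ` is included in one of them: the initial segments of an
enumeration of `x`. -/
lemma exists_small_pieces_s8 {α : Type u} {χ : Cardinal.{u}} (hreg : χ.IsRegular) (x : Set α)
    (hx : #x ≤ χ) :
    ∃ p : χ.ord.ToType → Set α, (∀ i, #(p i) < χ) ∧
      ∀ b ⊆ x, #b < χ → ∃ i, b ⊆ p i := by
  rw [← mk_ord_toType χ, Cardinal.le_def] at hx
  obtain ⟨f⟩ := hx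
  refine ⟨fun i => Subtype.val '' (f ⁻¹' Iio i), fun i => ?_, fun b hbx hb => ?_⟩
  · have hi : #(Iio i) < χ := by simpa using mk_Iio_lt i (by simp)
    exact mk_image_le.trans_lt ((mk_preimage_of_injective _ _ f.injective).trans_lt hi)
  · have hnot : ¬ IsCofinal (range fun y : b => f ⟨y, hbx y.2⟩) := by
      intro hcof
      have h1 := Order.cof_le hcof
      rw [Ordinal.cof_toType, hreg.cof_ord] at h1
      exact (h1.trans mk_range_le).not_gt hb
    rw [not_isCofinal_iff] at hnot
    obtain ⟨i, hi⟩ := hnot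
    exact ⟨i, fun y hy => ⟨⟨y, hbx hy⟩, hi _ ⟨⟨y, hy⟩, rfl⟩, rfl⟩⟩

/-- Let `χ` be a weakly inaccessible cardinal (an uncountable regular
limit cardinal) and `λ > χ` a cardinal. If `χ⁺` is a `λ`-revision cardinal, then so is
`χ`. -/
theorem stmt8 (χ lam : Cardinal.{u}) (hunc : ℵ₀ < χ) (hreg : χ.IsRegular)
    (hlim : IsLimitCard χ) (hχlam : χ < lam)
    (h : IsRevision (Order.succ χ) lam) :
    IsRevision χ lam := by
  obtain ⟨σ, hσ, hcov⟩ := h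
  obtain ⟨X, ⟨hXsmall, hXcov⟩, hXcard⟩ := cov_le_iff_exists_family.1 hcov
  choose p hpsmall hpcof using fun x : X =>
    exists_small_pieces_s8 hreg x.1 (Order.lt_succ_iff.1 (hXsmall x.1 x.2))
  let Y : Set (Set lam.out) := range fun q : X × χ.ord.ToType => p q.1 q.2
  have hYcard : #Y ≤ lam := by
    refine mk_range_le.trans ?_
    rw [mk_prod, lift_id, lift_id, mk_ord_toType]
    exact (mul_le_mul' hXcard hχlam.le).trans (mul_eq_self (hunc.trans hχlam).le).le
  have hYsmall : ∀ y ∈ Y, #y < χ := by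
    rintro _ ⟨q, rfl⟩
    exact hpsmall q.1 q.2
  have hrefine : ∀ b : Set lam.out, #b < χ → ∀ Q ⊆ X, b ⊆ ⋃₀ Q →
      ∃ R ⊆ Y, #R ≤ #Q ∧ b ⊆ ⋃₀ R := by
    intro b hb Q hQX hbQ
    choose i hi using fun x : Q => hpcof ⟨x.1, hQX x.2⟩ (b ∩ x.1) inter_subset_right
      ((mk_le_mk_of_subset inter_subset_left).trans_lt hb)
    refine ⟨range fun x : Q => p ⟨x.1, hQX x.2⟩ (i x), ?_, mk_range_le, fun y hy => ?_⟩
    · rintro _ ⟨x, rfl⟩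
      exact ⟨(⟨x.1, hQX x.2⟩, i x), rfl⟩
    · obtain ⟨x, hxQ, hyx⟩ := hbQ hy
      exact ⟨_, ⟨⟨x, hxQ⟩, rfl⟩, hi ⟨x, hxQ⟩ ⟨hy, hyx⟩⟩
  by_contra hno
  have hbad : ∀ τ : Cardinal.{u}, τ < χ → ∃ b : Set lam.out, #b < χ ∧
      ∀ R ⊆ Y, #R < τ → ¬ b ⊆ ⋃₀ R := by
    intro τ hτ
    by_contra! hgood
    exact hno ⟨τ, hτ, cov_le_iff_exists_family.2 ⟨Y, ⟨hYsmall, hgood⟩, hYcard⟩⟩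
  -- The cardinals below `χ` are indexed by `χ.ord.ToType`, which lives in the right universe:
  -- each of them is the cardinality of some ordinal below `χ.ord`.
  have hidx : ∀ i : χ.ord.ToType, (i.toOrd : Ordinal.{u}).card < χ := fun i =>
    lt_ord.1 i.toOrd.2
  choose b hbsmall hbbad using fun i : χ.ord.ToType => hbad _ (hidx i)
  have hunion : #(⋃ i, b i) < Order.succ χ := by
    rw [Order.lt_succ_iff]
    refine (mk_iUnion_le_sum_mk.trans (sum_le_sum _ (fun _ => χ) fun i => (hbsmall i).le)).trans ?_
    rw [sum_const', mk_ord_toType, mul_eq_self hunc.le]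
  obtain ⟨Q, hQX, hQcard, hQcov⟩ := hXcov _ hunion
  have hQχ : #Q < χ := hQcard.trans_le (Order.lt_succ_iff.1 hσ)
  have hsucc : Order.succ #Q < χ :=
    lt_of_le_of_ne (Order.succ_le_of_lt hQχ) fun he => hlim.2 _ he.symm
  let i : χ.ord.ToType := Ordinal.ToType.mk ⟨(Order.succ #Q).ord, ord_lt_ord.2 hsucc⟩
  have hi : (i.toOrd : Ordinal.{u}).card = Order.succ #Q := by
    simp [i]
  obtain ⟨R, hRY, hRcard, hRcov⟩ :=
    hrefine (b i) (hbsmall i) Q hQX ((subset_iUnion b i).trans hQcov)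
  exact hbbad i R hRY (hi ▸ hRcard.trans_lt (Order.lt_succ _)) hRcov
end

section
/- Let σ, χ, λ be infinite cardinals with σ < χ ≤ λ. If equal(λ, ρ⁺, ρ, σ) ≤ λ for every cardinal ρ with σ ≤ ρ < χ, then equal(λ, χ, <χ, σ) ≤ λ. Furthermore, if 2^{<χ} ≤ λ, then the converse holds: equal(λ, χ, <χ, σ) ≤ λ implies equal(λ, ρ⁺, ρ, σ) ≤ λ for every cardinal ρ with σ ≤ ρ < χ. -/
/-!
A bound `≤ λ` on either invariant says that a witnessing family of size at most `λ` exists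
(`equalCov_le_iff`, `equalLtCov_le_iff`).

For the forward implication, the union over `σ ≤ ρ < χ` of the families given for each `ρ`,
together with all singletons, is a family for `equal (λ, χ, <χ, σ)`: it is a union of at most
`χ ≤ λ` families of size at most `λ`, and a set with fewer than `σ` elements is the union of its
singletons.

For the converse, let `Z` be a family for `equal (λ, χ, <χ, σ)`. If `b` has size `ρ` and is a union
of members of `Z`, these members are subsets of `b`, so they have size at most `ρ`. Hence the
members of `Z` of size at most `ρ` form a family for `equal (λ, ρ⁺, ρ, σ)`.
-/

open Cardinal Set

universe u

/-- The convention `2 ^ λ` for a missing family makes a bound `≤ λ` equivalent to the existence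
of a family of size at most `λ`, by Cantor's theorem. -/
lemma equalCov_le_iff {lam tau rho sigma : Cardinal.{u}} :
    equalCov lam tau rho sigma ≤ lam ↔ ∃ Z, IsEqualFamily lam tau rho sigma Z ∧ #Z ≤ lam := by
  unfold equalCov
  constructor
  · intro h
    split_ifs at h with hex
    · obtain ⟨Z₀, hZ₀⟩ := hex
      have hne : {κ | ∃ Z, IsEqualFamily lam tau rho sigma Z ∧ #Z = κ}.Nonempty :=
        ⟨_, Z₀, hZ₀, rfl⟩
      obtain ⟨Z, hZ, hc⟩ := csInf_mem hne
      exact ⟨Z, hZ, hc ▸ h⟩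
    · exact absurd h (not_le.2 (cantor lam))
  · rintro ⟨Z, hZ, hc⟩
    rw [if_pos ⟨Z, hZ⟩]
    refine le_trans (csInf_le' ?_) hc
    exact ⟨Z, hZ, rfl⟩

/-- The analogue of `equalCov_le_iff` for `equalLtCov`. -/
lemma equalLtCov_le_iff {lam tau rho sigma : Cardinal.{u}} :
    equalLtCov lam tau rho sigma ≤ lam ↔
      ∃ Z, IsEqualLtFamily lam tau rho sigma Z ∧ #Z ≤ lam := by
  unfold equalLtCov
  constructor
  · intro h
    split_ifs at h with hex
    · obtain ⟨Z₀, hZ₀⟩ := hex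
      have hne : {κ | ∃ Z, IsEqualLtFamily lam tau rho sigma Z ∧ #Z = κ}.Nonempty :=
        ⟨_, Z₀, hZ₀, rfl⟩
      obtain ⟨Z, hZ, hc⟩ := csInf_mem hne
      exact ⟨Z, hZ, hc ▸ h⟩
    · exact absurd h (not_le.2 (cantor lam))
  · rintro ⟨Z, hZ, hc⟩
    rw [if_pos ⟨Z, hZ⟩]
    refine le_trans (csInf_le' ?_) hc
    exact ⟨Z, hZ, rfl⟩

/-- The cardinals below `χ` are enumerated by a set of size `χ` in the universe of `χ`;
the set of cardinals below `χ` itself lives one universe higher. -/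
lemma exists_enum_lt (χ : Cardinal.{u}) :
    ∃ f : χ.out → Cardinal.{u}, ∀ ρ < χ, ∃ i, f i = ρ := by
  have e : χ.ord.ToType ≃ χ.out := Classical.choice (Cardinal.eq.1 (by simp))
  refine ⟨fun i => (Ordinal.typein (α := χ.ord.ToType) (· < ·) (e.symm i)).card, fun ρ hρ => ?_⟩
  obtain ⟨a, ha⟩ := Ordinal.typein_surj (α := χ.ord.ToType) (· < ·) (o := ρ.ord)
    (by simpa using hρ)
  exact ⟨e a, by simp [ha]⟩

/-- Let `σ < χ ≤ λ` be infinite cardinals. If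
`equal (λ, ρ⁺, ρ, σ) ≤ λ` for every cardinal `ρ` with `σ ≤ ρ < χ`, then
`equal (λ, χ, <χ, σ) ≤ λ`.  Furthermore, if `2^{<χ} ≤ λ` then the converse holds. -/
theorem stmt10 (σ χ lam : Cardinal.{u}) (hσ : ℵ₀ ≤ σ) (hσχ : σ < χ) (hχlam : χ ≤ lam) :
    ((∀ ρ : Cardinal.{u}, σ ≤ ρ → ρ < χ → equalCov lam (Order.succ ρ) ρ σ ≤ lam) →
      equalLtCov lam χ χ σ ≤ lam) ∧
    ((2 : Cardinal.{u}) ^< χ ≤ lam → equalLtCov lam χ χ σ ≤ lam →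
      ∀ ρ : Cardinal.{u}, σ ≤ ρ → ρ < χ → equalCov lam (Order.succ ρ) ρ σ ≤ lam) := by
  constructor
  · intro h
    rw [equalLtCov_le_iff]
    have hlam : ℵ₀ ≤ lam := hσ.trans (hσχ.le.trans hχlam)
    obtain ⟨f, hf⟩ := exists_enum_lt χ
    have h' : ∀ ρ : Cardinal.{u}, ∃ Z : Set (Set lam.out), #Z ≤ lam ∧
        (∀ z ∈ Z, #z < χ) ∧ (σ ≤ ρ → ρ < χ → IsEqualFamily lam (Order.succ ρ) ρ σ Z) := by
      intro ρ
      by_cases hρ : σ ≤ ρ ∧ ρ < χ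
      · obtain ⟨Z, hZ, hc⟩ := equalCov_le_iff.1 (h ρ hρ.1 hρ.2)
        exact ⟨Z, hc, fun z hz => (Order.lt_succ_iff.1 (hZ.1 z hz)).trans_lt hρ.2,
          fun _ _ => hZ⟩
      · exact ⟨∅, by simp, by simp, fun h1 h2 => absurd ⟨h1, h2⟩ hρ⟩
    choose Z hZc hZχ hZ using h'
    refine ⟨(⋃ i, Z (f i)) ∪ range (fun x : lam.out => ({x} : Set lam.out)), ⟨?_, ?_⟩, ?_⟩
    · rintro z (hz | ⟨x, rfl⟩)
      · obtain ⟨i, hi⟩ := mem_iUnion.1 hz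
        exact hZχ _ z hi
      · rw [mk_singleton]
        exact one_lt_aleph0.trans (hσ.trans_lt hσχ)
    · intro b hb
      rcases lt_or_ge #b σ with hbσ | hbσ
      · refine ⟨(fun x => ({x} : Set lam.out)) '' b, ?_, mk_image_le.trans_lt hbσ, ?_⟩
        · rintro _ ⟨x, -, rfl⟩
          exact Or.inr ⟨x, rfl⟩
        · ext x
          simp
      · obtain ⟨i, hi⟩ := hf _ hb
        obtain ⟨e, he, hec, hbe⟩ := (hZ _ hbσ hb).2 b rfl
        refine ⟨e, fun z hz => Or.inl (mem_iUnion.2 ⟨i, ?_⟩), hec, hbe⟩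
        rw [hi]
        exact he hz
    · refine (mk_union_le _ _).trans (add_le_of_le hlam ?_ ?_)
      · calc #(⋃ i, Z (f i)) ≤ #χ.out * ⨆ i, #(Z (f i)) := mk_iUnion_le _
          _ ≤ lam * lam := mul_le_mul' (by simpa using hχlam) (ciSup_le' fun i => hZc _)
          _ = lam := mul_eq_self hlam
      · exact mk_range_le.trans (by simp)
  · intro _ h ρ _ hρχ
    obtain ⟨Z, hZ, hc⟩ := equalLtCov_le_iff.1 h
    refine equalCov_le_iff.2 ⟨{z ∈ Z | #z < Order.succ ρ}, ⟨fun z hz => hz.2, ?_⟩,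
      (mk_le_mk_of_subset (sep_subset _ _)).trans hc⟩
    intro b hb
    obtain ⟨e, he, hec, hbe⟩ := hZ.2 b (hb.trans_lt hρχ)
    refine ⟨e, fun z hz => ⟨he hz, Order.lt_succ_iff.2 ?_⟩, hec, hbe⟩
    rw [← hb]
    exact mk_le_mk_of_subset (hbe ▸ subset_sUnion_of_mem hz)
end

section
/- Let χ be an uncountable regular cardinal. Then for any cardinal λ ≥ χ and any cardinal σ with 2 ≤ σ < χ, cov(λ, χ, χ, σ) = max{χ, cov(λ, χ⁺, χ, σ)}. -/
/-!
Since `2 ≤ σ`, the family of all sets of size `< χ` witnesses both covering numbers, so both are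
attained minima.

For `≥`, a family of sets of size `< χ` is in particular a family of sets of size `< χ⁺`; and a
witnessing family covers `λ` pointwise, so by regularity of `χ ≤ λ` it cannot consist of fewer than
`χ` sets of size `< χ`.

For `≤`, write each member `x` of a witnessing family for `cov (λ, χ⁺, χ, σ)` as the increasing
union of `χ` pieces of size `< χ`. By regularity, every subset of `x` of size `< χ` lies in a single
piece (`exists_filtration`), so in any cover each `x` may be replaced by one of its pieces, and there
are at most `χ` pieces for each `x`.
-/

open Cardinal Set

universe u

theorem isCovFamily_setOf_lt {ρ₁ ρ₂ ρ₃ ρ₄ : Cardinal.{u}} (h : ρ₃ ≤ ρ₂) (h₄ : 2 ≤ ρ₄) :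
    IsCovFamily ρ₁ ρ₂ ρ₃ ρ₄ {x | #x < ρ₂} := by
  refine ⟨fun x hx => hx, fun b hb => ⟨{b}, ?_, ?_, ?_⟩⟩
  · rintro _ rfl
    exact hb.trans_le h
  · rw [mk_singleton]
    exact lt_of_lt_of_le (by norm_num) h₄
  · simp

theorem cov_le_mk {ρ₁ ρ₂ ρ₃ ρ₄ : Cardinal.{u}} {X : Set (Set ρ₁.out)}
    (hX : IsCovFamily ρ₁ ρ₂ ρ₃ ρ₄ X) : cov ρ₁ ρ₂ ρ₃ ρ₄ ≤ #X := by
  rw [cov, if_pos ⟨X, hX⟩]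
  exact csInf_le' ⟨X, hX, rfl⟩

theorem exists_mk_eq_cov {ρ₁ ρ₂ ρ₃ ρ₄ : Cardinal.{u}} (h : ρ₃ ≤ ρ₂) (h₄ : 2 ≤ ρ₄) :
    ∃ X, IsCovFamily ρ₁ ρ₂ ρ₃ ρ₄ X ∧ #X = cov ρ₁ ρ₂ ρ₃ ρ₄ := by
  have hex : ∃ X, IsCovFamily ρ₁ ρ₂ ρ₃ ρ₄ X := ⟨_, isCovFamily_setOf_lt h h₄⟩
  rw [cov, if_pos hex]
  obtain ⟨X, hX⟩ := hex
  exact csInf_mem (s := {κ | ∃ X, IsCovFamily ρ₁ ρ₂ ρ₃ ρ₄ X ∧ #X = κ}) ⟨_, X, hX, rfl⟩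

/-- A set of size at most a regular cardinal `χ` is filtered by `χ` pieces of size `< χ`, so that
each of its subsets of size `< χ` is absorbed by one piece. The pieces are the preimages of the
initial segments of `χ` under an injection. -/
theorem exists_filtration_s13 {α : Type u} {χ : Cardinal.{u}} (hreg : χ.IsRegular) (x : Set α)
    (hx : #x ≤ χ) :
    ∃ F : χ.ord.ToType → Set α, (∀ a, #(F a) < χ) ∧
      ∀ b ⊆ x, #b < χ → ∃ a, b ⊆ F a := by
  have hx' : #x ≤ #χ.ord.ToType := by rwa [mk_ord_toType]
  obtain ⟨f⟩ := hx'
  refine ⟨fun a => (↑) '' (f ⁻¹' Iio a), fun a => ?_, fun b hbx hb => ?_⟩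
  · calc #((↑) '' (f ⁻¹' Iio a) : Set α) ≤ #(f ⁻¹' Iio a) := mk_image_le
      _ ≤ #(Iio a) := mk_preimage_of_injective _ _ f.injective
      _ < χ := by simpa using mk_Iio_lt a (by simp)
  · have hlt : #(range fun y : b => f ⟨y, hbx y.2⟩) < Order.cof χ.ord.ToType := by
      rw [Ordinal.cof_toType, hreg.cof_ord]
      exact mk_range_le.trans_lt hb
    obtain ⟨a, ha⟩ := not_isCofinal_iff.1 fun h => (Order.cof_le h).not_gt hlt
    exact ⟨a, fun y hy => ⟨⟨y, hbx hy⟩, ha _ ⟨⟨y, hy⟩, rfl⟩, rfl⟩⟩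

theorem le_mk_of_isCovFamily {χ lam σ : Cardinal.{u}} (hreg : χ.IsRegular) (hlam : χ ≤ lam)
    {X : Set (Set lam.out)} (hX : IsCovFamily lam χ χ σ X) : χ ≤ #X := by
  by_contra! hlt
  have huniv : (⋃ x ∈ X, x) = (univ : Set lam.out) := by
    refine eq_univ_of_forall fun y => ?_
    obtain ⟨Q, hQX, -, hQ⟩ := hX.2 {y} (by
      rw [mk_singleton]; exact_mod_cast hreg.nat_lt 1)
    obtain ⟨x, hxQ, hyx⟩ := hQ rfl
    exact mem_biUnion (hQX hxQ) hyx
  have hsmall : #(⋃ x ∈ X, x) < χ :=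
    (card_biUnion_lt_iff_forall_of_isRegular hreg hlt).2 hX.1
  rw [huniv, mk_univ, mk_out] at hsmall
  exact hsmall.not_ge hlam

theorem exists_isCovFamily_le {χ lam σ : Cardinal.{u}} (hreg : χ.IsRegular)
    {X : Set (Set lam.out)} (hX : IsCovFamily lam (Order.succ χ) χ σ X) :
    ∃ Y, IsCovFamily lam χ χ σ Y ∧ #Y ≤ #X * χ := by
  have hex (x : X) := exists_filtration_s13 hreg (x : Set lam.out) (Order.lt_succ_iff.1 (hX.1 x x.2))
  choose F hFlt hF using hex
  refine ⟨range fun p : X × χ.ord.ToType => F p.1 p.2, ⟨?_, fun b hb => ?_⟩, ?_⟩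
  · rintro _ ⟨p, rfl⟩
    exact hFlt p.1 p.2
  · obtain ⟨Q, hQX, hQσ, hbQ⟩ := hX.2 b hb
    have hpiece (q : Q) : ∃ a, b ∩ q ⊆ F ⟨q, hQX q.2⟩ a :=
      hF ⟨q, hQX q.2⟩ _ inter_subset_right ((mk_le_mk_of_subset inter_subset_left).trans_lt hb)
    choose g hg using hpiece
    refine ⟨range fun q : Q => F ⟨q, hQX q.2⟩ (g q), ?_, mk_range_le.trans_lt hQσ, fun y hy => ?_⟩
    · rintro _ ⟨q, rfl⟩
      exact ⟨(⟨q, hQX q.2⟩, g q), rfl⟩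
    · obtain ⟨q, hq, hyq⟩ := hbQ hy
      exact ⟨_, ⟨⟨q, hq⟩, rfl⟩, hg ⟨q, hq⟩ ⟨hy, hyq⟩⟩
  · refine mk_range_le.trans ?_
    rw [mk_prod, lift_id, lift_id, mk_ord_toType]

/-- Let `χ` be an uncountable regular cardinal. Then for any cardinal
`λ ≥ χ` and any cardinal `σ` with `2 ≤ σ < χ`,
`cov (λ, χ, χ, σ) = max χ (cov (λ, χ⁺, χ, σ))`. -/
theorem stmt13 (χ : Cardinal.{u}) (hunc : ℵ₀ < χ) (hreg : χ.IsRegular) :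
    ∀ lam : Cardinal.{u}, χ ≤ lam → ∀ σ : Cardinal.{u}, 2 ≤ σ → σ < χ →
      cov lam χ χ σ = max χ (cov lam (Order.succ χ) χ σ) := by
  intro lam hlam σ hσ _
  apply le_antisymm
  · obtain ⟨X, hX, hXcard⟩ := exists_mk_eq_cov (ρ₁ := lam) (Order.le_succ χ) hσ
    obtain ⟨Y, hY, hYcard⟩ := exists_isCovFamily_le hreg hX
    rw [← hXcard]
    calc cov lam χ χ σ ≤ #Y := cov_le_mk hY
      _ ≤ #X * χ := hYcard
      _ ≤ max (max #X χ) ℵ₀ := mul_le_max _ _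
      _ ≤ max χ #X := by
        rw [max_comm #X χ]
        exact max_le le_rfl (hunc.le.trans (le_max_left _ _))
  · obtain ⟨X, hX, hXcard⟩ := exists_mk_eq_cov (ρ₁ := lam) (le_refl χ) hσ
    rw [← hXcard]
    exact max_le (le_mk_of_isCovFamily hreg hlam hX)
      (cov_le_mk ⟨fun x hx => (hX.1 x hx).trans (Order.lt_succ χ), hX.2⟩)
end

section
/- Let σ, χ, λ be cardinals with cf(χ) < σ = cf(σ) < χ ≤ λ. Then equal(λ, χ, χ, σ) ≤ sup{equal(λ, ρ⁺, ρ, σ) : σ ≤ ρ < χ, ρ a cardinal}. -/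
/-!
The hypotheses force `σ` to be infinite, hence regular, so `χ` is singular. Since `[λ]^ρ` is itself a
family witnessing `equal (λ, ρ⁺, ρ, σ)`, this number is always attained by an actual family
(`exists_family_eq`); moreover such a family covers `λ`, so it has at least `λ` members
(`le_equalCov`).

Write `χ` as a union of `cf χ` many subsets `P_a` with `σ ≤ |P_a| < χ`, and let `Z` be the union
of optimal families for `ρ = |P_a|`. A set `b` of size `χ` is the union of the `cf χ < σ` many
copies of the `P_a`, each a union of fewer than `σ` members of `Z`, so by regularity `b` is a
union of fewer than `σ` members of `Z`. Finally `|Z|` is at most `cf χ` times the supremum, and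
the supremum absorbs the factor because it is at least `λ ≥ χ ≥ cf χ`.
-/

open Cardinal Set

universe u

/-- The number `equal (λ, ρ⁺, ρ, σ)` is attained: the family `[λ]^ρ` itself is a witness, since
each `b` is the union of `{b}`. -/
lemma exists_family_eq (lam ρ σ : Cardinal.{u}) (hσ : ℵ₀ ≤ σ) :
    ∃ Z, IsEqualFamily lam (Order.succ ρ) ρ σ Z ∧ #Z = equalCov lam (Order.succ ρ) ρ σ := by
  have hex : ∃ Z, IsEqualFamily lam (Order.succ ρ) ρ σ Z := by
    refine ⟨{z | #z = ρ}, fun z hz => ?_, fun b hb => ⟨{b}, ?_, ?_, ?_⟩⟩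
    · rw [mem_ofPred_eq] at hz
      rw [hz]
      exact Order.lt_succ ρ
    · simpa using hb
    · simpa using one_lt_aleph0.trans_le hσ
    · simp
  have hmem := csInf_mem (s := {κ | ∃ Z, IsEqualFamily lam (Order.succ ρ) ρ σ Z ∧ #Z = κ})
    (hex.elim fun Z hZ => ⟨#Z, Z, hZ, rfl⟩)
  rw [equalCov, if_pos hex]
  exact hmem

/-- A family witnessing `equal (λ, ρ⁺, ρ, σ)` consists of sets of size at most `ρ < λ` and
covers `λ`, so it has at least `λ` members. -/
lemma le_equalCov (lam ρ σ : Cardinal.{u}) (hσ : ℵ₀ ≤ σ) (hρ : ℵ₀ ≤ ρ) (hlt : ρ < lam) :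
    lam ≤ equalCov lam (Order.succ ρ) ρ σ := by
  obtain ⟨Z, ⟨hZ₁, hZ₂⟩, hZ⟩ := exists_family_eq lam ρ σ hσ
  rw [← hZ]
  have hcov : ⋃₀ Z = Set.univ := by
    refine eq_univ_of_forall fun x => ?_
    obtain ⟨s, hs⟩ := le_mk_iff_exists_set.1 (hlt.le.trans_eq (mk_out lam).symm)
    have hins : #(insert x s : Set lam.out) = ρ := by
      refine le_antisymm (mk_insert_le.trans ?_) ?_
      · rw [hs, add_one_eq hρ]
      · rw [← hs]
        exact mk_le_mk_of_subset (subset_insert x s)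
    obtain ⟨e, he, -, hbe⟩ := hZ₂ _ hins
    exact sUnion_subset_sUnion he (hbe ▸ mem_insert x s)
  have hle : lam ≤ #Z * ρ := by
    calc lam = #(⋃₀ Z) := by rw [hcov, mk_univ, mk_out]
      _ ≤ #Z * ⨆ z : Z, #z := mk_sUnion_le Z
      _ ≤ #Z * ρ := by
        gcongr
        exact ciSup_le' fun z => Order.lt_succ_iff.1 (hZ₁ z z.2)
  by_contra! hlt'
  exact absurd hle (mul_lt_of_lt (hρ.trans hlt.le) hlt' hlt).not_ge

/-- The hypotheses of `stmt14` exclude finite `σ`. -/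
lemma isRegular_of_cof {σ χ : Cardinal.{u}} (h1 : χ.ord.cof < σ) (h2 : σ.ord.cof = σ)
    (h3 : σ < χ) : σ.IsRegular := by
  refine ⟨?_, h2.ge⟩
  by_contra! hfin
  have hle : σ ≤ 1 := by
    rw [← h2] at hfin ⊢
    exact Ordinal.cof_lt_aleph0_iff.1 hfin
  have h0 : χ.ord.cof = 0 := Cardinal.lt_one_iff.1 (h1.trans_le hle)
  rw [Ordinal.cof_eq_zero, Cardinal.ord_eq_zero] at h0
  exact not_lt_zero (h0 ▸ h3)

/-- A set of size `χ` is a union of `cf χ` many subsets of size in `[σ, χ)`. -/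
lemma exists_decomposition {σ χ : Cardinal.{u}} (hσ : ℵ₀ ≤ σ) (h3 : σ < χ) :
    ∃ (A : Type u) (P : A → Set χ.ord.ToType), #A = χ.ord.cof ∧
      (∀ a, σ ≤ #(P a)) ∧ (∀ a, #(P a) < χ) ∧ ⋃ a, P a = Set.univ := by
  have hχ : ℵ₀ ≤ χ := hσ.trans h3.le
  obtain ⟨A, hA, hAc⟩ := Order.exists_cof_eq χ.ord.ToType
  obtain ⟨S, hS⟩ := le_mk_iff_exists_set.1 (h3.le.trans_eq (mk_ord_toType χ).symm)
  -- Adding the fixed set `S` of size `σ` to each initial segment gives the lower bound on sizes.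
  refine ⟨A, fun a => Iic a.1 ∪ S, by rw [hAc, Ordinal.cof_toType], fun a => ?_, fun a => ?_, ?_⟩
  · rw [← hS]
    exact mk_le_mk_of_subset subset_union_right
  · have hIic : #(Iic a.1) < χ := by simpa using mk_Iic_lt a.1 (by simp) (by simpa using hχ)
    exact (mk_union_le _ _).trans_lt (add_lt_of_lt hχ hIic (hS ▸ h3))
  · refine eq_univ_of_forall fun x => ?_
    obtain ⟨a, ha, hxa⟩ := hA x
    exact mem_iUnion.2 ⟨⟨a, ha⟩, Or.inl hxa⟩

/-- Let `σ, χ, λ` be cardinals with `cf χ < σ = cf σ < χ ≤ λ`. Then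
`equal (λ, χ, χ, σ) ≤ sup {equal (λ, ρ⁺, ρ, σ) : σ ≤ ρ < χ}`. -/
theorem stmt14 (σ χ lam : Cardinal.{u}) (h1 : χ.ord.cof < σ) (h2 : σ.ord.cof = σ)
    (h3 : σ < χ) (h4 : χ ≤ lam) :
    equalCov lam χ χ σ ≤
      sSup {c : Cardinal.{u} |
        ∃ ρ : Cardinal.{u}, σ ≤ ρ ∧ ρ < χ ∧ c = equalCov lam (Order.succ ρ) ρ σ} := by
  have hreg := isRegular_of_cof h1 h2 h3
  have hσ : ℵ₀ ≤ σ := hreg.aleph0_le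
  set C := {c : Cardinal.{u} |
    ∃ ρ : Cardinal.{u}, σ ≤ ρ ∧ ρ < χ ∧ c = equalCov lam (Order.succ ρ) ρ σ} with hC
  -- Without boundedness the supremum of cardinals would be the junk value `0`.
  have hbdd : BddAbove C := by
    have hsub : C ⊆ (fun ρ => equalCov lam (Order.succ ρ) ρ σ) '' Iio χ := by
      rintro c ⟨ρ, -, hρ, rfl⟩
      exact ⟨ρ, hρ, rfl⟩
    exact (bddAbove_of_small (s := (fun ρ => equalCov lam (Order.succ ρ) ρ σ) '' Iio χ)).mono hsub
  have hsup : ∀ ρ, σ ≤ ρ → ρ < χ → equalCov lam (Order.succ ρ) ρ σ ≤ sSup C :=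
    fun ρ hρ hρ' => le_csSup hbdd ⟨ρ, hρ, hρ', rfl⟩
  have hlam : lam ≤ sSup C :=
    (le_equalCov lam σ σ hσ hσ (h3.trans_le h4)).trans (hsup σ le_rfl h3)
  obtain ⟨A, P, hA, hP₁, hP₂, hP₃⟩ := exists_decomposition hσ h3
  choose Z hZ hZc using fun a => exists_family_eq lam #(P a) σ hσ
  have hfam : IsEqualFamily lam χ χ σ (⋃ a, Z a) := by
    refine ⟨fun z hz => ?_, fun b hb => ?_⟩
    · obtain ⟨a, ha⟩ := mem_iUnion.1 hz
      exact (Order.lt_succ_iff.1 ((hZ a).1 z ha)).trans_lt (hP₂ a)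
    · obtain ⟨f⟩ : Nonempty (χ.ord.ToType ≃ b) := Cardinal.eq.1 (by rw [mk_ord_toType, hb])
      -- `g a` is the copy of `P a` inside `b`.
      let g : A → Set lam.out := fun a => (fun t => (f t : lam.out)) '' P a
      have hg : ∀ a, #(g a) = #(P a) :=
        fun a => mk_image_eq (Subtype.val_injective.comp f.injective)
      choose e he₁ he₂ he₃ using fun a => (hZ a).2 (g a) (hg a)
      refine ⟨⋃ a, e a, iUnion_mono he₁, ?_, ?_⟩
      · exact (card_iUnion_lt_iff_forall_of_isRegular hreg (hA ▸ h1)).2 he₂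
      · rw [sUnion_iUnion, ← iUnion_congr he₃, ← image_iUnion, hP₃, image_univ]
        ext x
        constructor
        · intro hx
          exact ⟨f.symm ⟨x, hx⟩, by simp⟩
        · rintro ⟨t, rfl⟩
          exact (f t).2
  have hcard : #(⋃ a, Z a : Set (Set lam.out)) ≤ sSup C := by
    calc #(⋃ a, Z a : Set (Set lam.out)) ≤ #A * ⨆ a, #(Z a) := mk_iUnion_le Z
      _ ≤ sSup C * sSup C := by
        gcongr
        · rw [hA]
          exact (h1.le.trans (h3.le.trans h4)).trans hlam
        · exact ciSup_le' fun a => (hZc a).trans_le (hsup _ (hP₁ a) (hP₂ a))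
      _ = sSup C := mul_eq_self ((hσ.trans (h3.le.trans h4)).trans hlam)
  rw [equalCov, if_pos ⟨_, hfam⟩]
  exact le_trans (csInf_le' (mem_ofPred.2 ⟨_, hfam, rfl⟩)) hcard
end

section
/- Let σ ≤ ρ < λ be three infinite cardinals. Then cov(λ, ρ⁺, ρ⁺, σ) ≤ equal(λ, ρ⁺, ρ, σ) ≤ max{2^ρ, cov(λ, ρ⁺, ρ⁺, σ)}. -/
/-!
Both witnessing families exist, since `𝒫_{ρ⁺}(λ)` itself is one, so the two cardinals are genuine
minima. A set of size at most `ρ` extends to one of size exactly `ρ` because `ρ < λ`, so a family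
witnessing `equal` also witnesses `cov`. Conversely, if `X` witnesses `cov`, then the family of all
subsets of members of `X` witnesses `equal`: whenever `b ⊆ ⋃ Q`, the set `b` is the union of the
traces `b ∩ x`, `x ∈ Q`. That family has size at most `|X| * 2 ^ ρ`.
-/

open Cardinal Set

universe u

theorem IsEqualFamily.isCovFamily {σ ρ lam : Cardinal.{u}} (hρ : ℵ₀ ≤ ρ) (hρlam : ρ ≤ lam)
    {Z : Set (Set lam.out)} (hZ : IsEqualFamily lam (Order.succ ρ) ρ σ Z) :
    IsCovFamily lam (Order.succ ρ) (Order.succ ρ) σ Z := by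
  refine ⟨hZ.1, fun b hb => ?_⟩
  obtain ⟨c, hc⟩ : ∃ c : Set lam.out, #c = ρ := by
    rw [← Cardinal.le_mk_iff_exists_set, Cardinal.mk_out]
    exact hρlam
  have hbc : #(b ∪ c : Set lam.out) = ρ := by
    apply le_antisymm
    · calc #(b ∪ c : Set lam.out) ≤ #b + #c := Cardinal.mk_union_le b c
        _ ≤ ρ + ρ := add_le_add (Order.lt_succ_iff.mp hb) hc.le
        _ = ρ := Cardinal.add_eq_self hρ
    · exact hc.symm.le.trans (Cardinal.mk_le_mk_of_subset subset_union_right)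
  obtain ⟨e, heZ, he, hbe⟩ := hZ.2 _ hbc
  exact ⟨e, heZ, he, hbe ▸ subset_union_left⟩

theorem IsCovFamily.isEqualFamily_powerset {σ ρ lam : Cardinal.{u}} {X : Set (Set lam.out)}
    (hX : IsCovFamily lam (Order.succ ρ) (Order.succ ρ) σ X) :
    IsEqualFamily lam (Order.succ ρ) ρ σ (⋃ x : X, 𝒫 (x : Set lam.out)) := by
  constructor
  · intro z hz
    obtain ⟨x, hzx⟩ := mem_iUnion.mp hz
    exact (Cardinal.mk_le_mk_of_subset hzx).trans_lt (hX.1 x x.2)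
  · intro b hb
    obtain ⟨Q, hQX, hQ, hbQ⟩ := hX.2 b (hb ▸ Order.lt_succ ρ)
    refine ⟨(fun x => b ∩ x) '' Q, ?_, Cardinal.mk_image_le.trans_lt hQ, ?_⟩
    · rintro _ ⟨x, hx, rfl⟩
      exact mem_iUnion.mpr ⟨⟨x, hQX hx⟩, inter_subset_right⟩
    · rw [sUnion_image, ← inter_iUnion₂, ← sUnion_eq_biUnion, inter_eq_left.mpr hbQ]

theorem mk_iUnion_powerset_le {α : Type u} {ρ : Cardinal.{u}} (hρ : ℵ₀ ≤ ρ) {X : Set (Set α)}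
    (hX : ∀ x ∈ X, #x < Order.succ ρ) :
    #(⋃ x : X, 𝒫 (x : Set α) : Set (Set α)) ≤ max (2 ^ ρ) #X := by
  have h2 : ℵ₀ ≤ (2 : Cardinal.{u}) ^ ρ := hρ.trans (Cardinal.cantor ρ).le
  have hsup : ⨆ x : X, #(𝒫 (x : Set α)) ≤ 2 ^ ρ := by
    refine ciSup_le' fun x => ?_
    rw [Cardinal.mk_powerset]
    exact Cardinal.power_le_power_left two_ne_zero (Order.lt_succ_iff.mp (hX x x.2))
  calc #(⋃ x : X, 𝒫 (x : Set α) : Set (Set α)) ≤ #X * ⨆ x : X, #(𝒫 (x : Set α)) :=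
        Cardinal.mk_iUnion_le _
    _ ≤ #X * 2 ^ ρ := mul_le_mul_right hsup _
    _ ≤ max (max #X (2 ^ ρ)) ℵ₀ := Cardinal.mul_le_max _ _
    _ ≤ max (2 ^ ρ) #X :=
        max_le (max_comm _ _).le (h2.trans (le_max_left _ _))

theorem exists_isEqualFamily {σ : Cardinal.{u}} (ρ lam : Cardinal.{u}) (hσ : ℵ₀ ≤ σ) :
    ∃ Z, IsEqualFamily lam (Order.succ ρ) ρ σ Z := by
  refine ⟨{z | #z < Order.succ ρ}, fun _ hz => hz, fun b hb => ⟨{b}, ?_, ?_, ?_⟩⟩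
  · rintro _ rfl
    exact hb.trans_lt (Order.lt_succ ρ)
  · rw [Cardinal.mk_singleton]
    exact Cardinal.one_lt_aleph0.trans_le hσ
  · rw [sUnion_singleton]

/-- Let `σ ≤ ρ < λ` be three infinite cardinals. Then
`cov (λ, ρ⁺, ρ⁺, σ) ≤ equal (λ, ρ⁺, ρ, σ) ≤ max (2^ρ) (cov (λ, ρ⁺, ρ⁺, σ))`. -/
theorem stmt15 (σ ρ lam : Cardinal.{u}) (hσ : ℵ₀ ≤ σ) (hσρ : σ ≤ ρ) (hρlam : ρ < lam) :
    cov lam (Order.succ ρ) (Order.succ ρ) σ ≤ equalCov lam (Order.succ ρ) ρ σ ∧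
      equalCov lam (Order.succ ρ) ρ σ
        ≤ max (2 ^ ρ) (cov lam (Order.succ ρ) (Order.succ ρ) σ) := by
  have hρ : ℵ₀ ≤ ρ := hσ.trans hσρ
  have hE := exists_isEqualFamily ρ lam hσ
  have hC : ∃ X, IsCovFamily lam (Order.succ ρ) (Order.succ ρ) σ X :=
    hE.imp fun _ hZ => hZ.isCovFamily hρ hρlam.le
  rw [cov, equalCov, if_pos hE, if_pos hC]
  constructor
  · obtain ⟨Z, hZ⟩ := hE
    refine le_csInf ⟨_, Z, hZ, rfl⟩ ?_
    rintro _ ⟨Y, hY, rfl⟩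
    exact csInf_le' ⟨Y, hY.isCovFamily hρ hρlam.le, rfl⟩
  · obtain ⟨X, hX⟩ := hC
    obtain ⟨Y, hY, hYcard⟩ := csInf_mem
      (s := {κ | ∃ X, IsCovFamily lam (Order.succ ρ) (Order.succ ρ) σ X ∧ #X = κ})
      ⟨_, X, hX, rfl⟩
    rw [← hYcard]
    refine le_trans (csInf_le' ?_) (mk_iUnion_powerset_le hρ hY.1)
    exact ⟨_, hY.isEqualFamily_powerset, rfl⟩
end

section
/- The following are equivalent: (i) GCH holds, i.e., 2^κ = κ⁺ for every infinite cardinal κ; (ii) equal(λ, κ⁺, κ, κ) ≤ λ for any two regular infinite cardinals κ < λ; (iii) λ^κ ≤ λ^{<κ} for any two regular infinite cardinals κ < λ; (iv) λ^κ ≤ λ for any two regular infinite cardinals κ < λ. -/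
/-!
The implications (i) → (iv) → (ii) → (iii) → (iv) → (i) hold for the following reasons.

* (i) → (iv): for `λ` regular and `κ < λ`, every function `κ → λ` is bounded, so
  `λ ^ κ ≤ ∑_{α < λ} |α| ^ κ`, and under GCH each summand is at most
  `2 ^ max |α| κ = (max |α| κ)⁺ ≤ λ`.
* (iv) → (ii): all subsets of `λ` of size at most `κ` form a witness with at most `λ ^ κ` members.
* (ii) → (iii): if `Z` is a witness with `|Z| ≤ λ`, then `b ↦ e` injects `[λ]^κ`, a set of size
  `λ ^ κ`, into the subsets of `Z` of size less than `κ`, of which there are at most `λ ^{<κ}`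
  (`mk_sets_lt_le`).
* (iii) → (iv) and (iv) → (i) both rest on `power_le_of_regular`: when `λ ^ ν ≤ λ` for all regular
  `ν ≤ κ`, then `λ ^ κ ≤ λ` even if `κ` is singular, because a singular `κ` is the union of
  `cof κ` many sets of size less than `κ`. The first implication is then an induction on `κ`,
  the second applies the lemma to `λ = κ⁺`, by `2 ^ κ ≤ (κ⁺) ^ κ`.
-/

open Cardinal Set

universe u

/-- Functions from a set of size less than a regular cardinal into that cardinal are bounded. -/
lemma exists_forall_lt_of_isRegular {lam : Cardinal.{u}} (hl : lam.IsRegular) {K : Type u}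
    (hK : #K < lam) (f : K → lam.ord.ToType) : ∃ x, ∀ i, f i < x := by
  by_contra! h
  have hc : IsCofinal (range f) := fun x => by
    obtain ⟨i, hi⟩ := h x
    exact ⟨f i, ⟨i, rfl⟩, hi⟩
  have h1 := Order.cof_le hc
  rw [Ordinal.cof_toType, hl.cof_ord] at h1
  exact absurd (h1.trans mk_range_le) (not_le.2 hK)

/-- The subsets of size less than a regular `κ < λ` of a set of size at most `λ` number at most
`λ ^< κ`. -/
lemma mk_sets_lt_le {κ lam : Cardinal.{u}} (hκ : κ.IsRegular) (h : κ < lam) (A : Type u)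
    (hA : #A ≤ lam) : #{e : Set A // #e < κ} ≤ lam ^< κ := by
  have hl : ℵ₀ ≤ lam := hκ.aleph0_le.trans h.le
  have hll : lam ≤ lam ^< κ := by
    simpa using le_powerlt lam (show (1 : Cardinal) < κ from by simpa using hκ.nat_lt 1)
  have key : ∀ e : {e : Set A // #e < κ}, ∃ x : κ.ord.ToType, #e.1 ≤ #(Iio x) := by
    rintro ⟨e, he⟩
    have : #e ≤ #κ.ord.ToType := by simpa using he.le
    obtain ⟨g⟩ := this
    obtain ⟨x, hx⟩ := exists_forall_lt_of_isRegular hκ he g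
    exact ⟨x, ⟨⟨fun i => ⟨g i, hx i⟩, fun a b hab => g.injective (congrArg Subtype.val hab)⟩⟩⟩
  choose X hX using key
  have hinj : Function.Injective
      (fun e => (⟨X e, ⟨e.1, hX e⟩⟩ : Σ x : κ.ord.ToType, {t : Set A // #t ≤ #(Iio x)})) := by
    intro a b hab
    simp only [Sigma.mk.injEq] at hab
    obtain ⟨h1, h2⟩ := hab
    apply Subtype.ext
    have : ∀ (x y : κ.ord.ToType) (p : {t : Set A // #t ≤ #(Iio x)})
        (q : {t : Set A // #t ≤ #(Iio y)}), x = y → p ≍ q → p.1 = q.1 := by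
      rintro x y p q rfl h
      rw [eq_of_heq h]
    exact this _ _ _ _ h1 h2
  refine (mk_le_of_injective hinj).trans ?_
  rw [mk_sigma]
  have hb : ∀ x : κ.ord.ToType, #{t : Set A // #t ≤ #(Iio x)} ≤ lam ^< κ := fun x => by
    refine (mk_bounded_set_le A _).trans ?_
    refine (Cardinal.power_le_power_right (max_le hA hl)).trans ?_
    exact le_powerlt _ (mk_Iio_toType_ord_lt x)
  refine (Cardinal.sum_le_sum _ _ hb).trans ?_
  rw [Cardinal.sum_const', mk_ord_toType]
  exact mul_le_of_le (hl.trans hll) (h.le.trans hll) le_rfl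

/-- For infinite `κ`, closure of `λ` under regular exponents up to `κ` yields closure under the exponent `κ`
itself, regular or not. -/
lemma power_le_of_regular {κ lam : Cardinal.{u}} (hl : ℵ₀ ≤ lam) (hκ : ℵ₀ ≤ κ)
    (H : ∀ ν : Cardinal.{u}, ν.IsRegular → ν ≤ κ → lam ^ ν ≤ lam) : lam ^ κ ≤ lam := by
  rcases isRegular_or_isSingular hκ with hr | hs
  · exact H κ hr le_rfl
  have hsmall : ∀ ν < κ, lam ^ ν ≤ lam := fun ν hν => by
    rcases lt_or_ge ν ℵ₀ with hf | hi
    · exact Cardinal.pow_le hl hf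
    · exact (power_le_power_left (Cardinal.aleph0_pos.trans_le hl).ne' (Order.le_succ ν)).trans
        (H _ (isRegular_succ hi) (Order.succ_le_of_lt hν))
  -- `s` is cofinal of size `cof κ`; a function on `κ` is determined by its restrictions to the
  -- initial segments `Iic y`, `y ∈ s`.
  obtain ⟨s, hs1, hs2⟩ := Order.exists_cof_eq κ.ord.ToType
  rw [Ordinal.cof_toType] at hs2
  have hcof : lam ^ #s ≤ lam := by
    rw [hs2]
    exact H _ (isRegular_cof (isSuccLimit_ord hκ)) (Ordinal.cof_ord_le κ)
  have hIic : ∀ y : κ.ord.ToType, #(Iic y) < κ := fun y => by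
    rw [← Iio_insert]
    exact mk_insert_le.trans_lt
      (add_lt_of_lt hκ (mk_Iio_toType_ord_lt y) (one_lt_aleph0.trans_le hκ))
  have hinj : Function.Injective
      (fun (f : κ.ord.ToType → lam.out) (y : s) (i : Iic y.1) => f i.1) := by
    intro f g hfg
    funext x
    obtain ⟨y, hy, hxy⟩ := hs1 x
    exact congrFun (congrFun hfg ⟨y, hy⟩) ⟨x, hxy⟩
  have h1 := mk_le_of_injective hinj
  rw [← Cardinal.power_def, mk_ord_toType, mk_out, mk_pi] at h1
  refine h1.trans ((Cardinal.prod_le_prod _ (fun _ => lam) fun y => ?_).trans ?_)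
  · rw [← Cardinal.power_def, mk_out]
    exact hsmall _ (hIic y)
  · rwa [Cardinal.prod_const']

lemma gch_power_le (gch : ∀ κ : Cardinal.{u}, ℵ₀ ≤ κ → 2 ^ κ = Order.succ κ)
    {κ lam : Cardinal.{u}} (hκ : ℵ₀ ≤ κ) (hl : lam.IsRegular) (h : κ < lam) : lam ^ κ ≤ lam := by
  have hK : #κ.out < lam := by simpa using h
  choose X hX using fun f : κ.out → lam.ord.ToType => exists_forall_lt_of_isRegular hl hK f
  have hsurj : Function.Surjective (fun (p : Σ x : lam.ord.ToType, (κ.out → Iio x)) =>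
      (fun i => (p.2 i).1 : κ.out → lam.ord.ToType)) :=
    fun f => ⟨⟨X f, fun i => ⟨f i, hX f i⟩⟩, rfl⟩
  have h1 := mk_le_of_surjective hsurj
  rw [← Cardinal.power_def, mk_ord_toType, mk_out, mk_sigma] at h1
  refine h1.trans ((Cardinal.sum_le_sum _ (fun _ => lam) fun x => ?_).trans ?_)
  · rw [← Cardinal.power_def, mk_out]
    have hm : ℵ₀ ≤ max #(Iio x) κ := hκ.trans (le_max_right _ _)
    calc #(Iio x) ^ κ ≤ (max #(Iio x) κ) ^ (max #(Iio x) κ) :=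
          (Cardinal.power_le_power_right (le_max_left _ _)).trans
            (power_le_power_left (aleph0_pos.trans_le hm).ne' (le_max_right _ _))
      _ = Order.succ (max #(Iio x) κ) := by rw [power_self_eq hm, gch _ hm]
      _ ≤ lam := Order.succ_le_of_lt (max_lt (mk_Iio_toType_ord_lt x) h)
  · rw [Cardinal.sum_const', mk_ord_toType, mul_eq_self hl.aleph0_le]

lemma equalCov_le_of_power_le {κ lam : Cardinal.{u}} (hκ : ℵ₀ ≤ κ) (h : κ < lam)
    (hp : lam ^ κ ≤ lam) : equalCov lam (Order.succ κ) κ κ ≤ lam := by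
  have hZ : IsEqualFamily lam (Order.succ κ) κ κ {z | #z ≤ κ} :=
    ⟨fun z hz => Order.lt_succ_of_le hz, fun b hb =>
      ⟨{b}, by simpa using hb.le, by simpa using one_lt_aleph0.trans_le hκ, by simp⟩⟩
  rw [equalCov, if_pos ⟨_, hZ⟩]
  have hle : sInf {κ' | ∃ Z, IsEqualFamily lam (Order.succ κ) κ κ Z ∧ #Z = κ'} ≤ _ :=
    csInf_le' ⟨_, hZ, rfl⟩
  refine hle.trans ((mk_bounded_set_le lam.out κ).trans ?_)
  rwa [mk_out, max_eq_left (hκ.trans h.le)]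

lemma power_le_powerlt_of_equalCov_le {κ lam : Cardinal.{u}} (hκ : κ.IsRegular) (h : κ < lam)
    (he : equalCov lam (Order.succ κ) κ κ ≤ lam) : lam ^ κ ≤ lam ^< κ := by
  have hl : ℵ₀ ≤ lam := hκ.aleph0_le.trans h.le
  unfold equalCov at he
  split_ifs at he with hex
  swap
  · exact absurd he (not_le.2 (cantor lam))
  obtain ⟨Z, hZ, hZc⟩ := csInf_mem (s := {κ' | ∃ Z, IsEqualFamily lam (Order.succ κ) κ κ Z ∧
    #Z = κ'}) (by obtain ⟨Z, hZ⟩ := hex; exact ⟨_, Z, hZ, rfl⟩)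
  rw [← hZc] at he
  -- A function `κ → λ` is coded by its graph, transported along `κ × λ ≃ λ`.
  have hprod : #(κ.out × lam.out) = #lam.out := by
    rw [mk_prod]
    simpa using mul_eq_right hl h.le hκ.pos.ne'
  obtain ⟨φ⟩ := Cardinal.eq.1 hprod
  let G : (κ.out → lam.out) → Set lam.out := fun f => range fun i => φ (i, f i)
  have hG : ∀ f, #(G f) = κ := fun f => by
    rw [mk_range_eq _ (fun a b hab => congrArg Prod.fst (φ.injective hab)), mk_out]
  have hGinj : Function.Injective G := fun f g hfg => by
    funext i
    have : φ (i, f i) ∈ G g := hfg ▸ ⟨i, rfl⟩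
    obtain ⟨j, hj⟩ := this
    have := φ.injective hj
    simp only [Prod.mk.injEq] at this
    obtain ⟨rfl, h2⟩ := this
    exact h2.symm
  choose E hE1 hE2 hE3 using fun f => hZ.2 (G f) (hG f)
  have hinj : Function.Injective (fun f => (⟨(Subtype.val ⁻¹' E f : Set Z),
      (mk_preimage_of_injective _ _ Subtype.val_injective).trans_lt (hE2 f)⟩ :
      {e : Set Z // #e < κ})) := by
    intro f g hfg
    have h1 : (Subtype.val ⁻¹' E f : Set Z) = Subtype.val ⁻¹' E g := congrArg Subtype.val hfg
    have h2 : E f = E g := by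
      have h3 := congrArg (fun t : Set Z => Subtype.val '' t) h1
      simpa [Subtype.image_preimage_coe, inter_eq_right.2 (hE1 f), inter_eq_right.2 (hE1 g)]
        using h3
    exact hGinj (by rw [hE3 f, hE3 g, h2])
  have := (mk_le_of_injective hinj).trans (mk_sets_lt_le hκ h Z he)
  rwa [← Cardinal.power_def, mk_out, mk_out] at this

lemma power_le_of_power_le_powerlt
    (H : ∀ κ lam : Cardinal.{u}, κ.IsRegular → lam.IsRegular → κ < lam → lam ^ κ ≤ lam ^< κ)
    {lam : Cardinal.{u}} (hl : lam.IsRegular) (κ : Cardinal.{u}) (hκ : κ.IsRegular)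
    (h : κ < lam) : lam ^ κ ≤ lam := by
  induction κ using WellFoundedLT.induction with
  | ind κ ih =>
    refine (H κ lam hκ hl h).trans (powerlt_le.2 fun ν hν => ?_)
    rcases lt_or_ge ν ℵ₀ with hf | hi
    · exact Cardinal.pow_le hl.aleph0_le hf
    · exact power_le_of_regular hl.aleph0_le hi fun μ hμ hμν =>
        ih μ (hμν.trans_lt hν) hμ ((hμν.trans_lt hν).trans h)

/-- The following are equivalent: (i) GCH; (ii)
`equal (λ, κ⁺, κ, κ) ≤ λ` for any two regular infinite cardinals `κ < λ`; (iii)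
`λ^κ ≤ λ^{<κ}` for any two regular infinite cardinals `κ < λ`; (iv) `λ^κ ≤ λ` for any
two regular infinite cardinals `κ < λ`. -/
theorem stmt19 :
    List.TFAE
      [∀ κ : Cardinal.{u}, ℵ₀ ≤ κ → 2 ^ κ = Order.succ κ,
       ∀ κ lam : Cardinal.{u}, κ.IsRegular → lam.IsRegular → κ < lam →
         equalCov lam (Order.succ κ) κ κ ≤ lam,
       ∀ κ lam : Cardinal.{u}, κ.IsRegular → lam.IsRegular → κ < lam →
         lam ^ κ ≤ lam ^< κ,
       ∀ κ lam : Cardinal.{u}, κ.IsRegular → lam.IsRegular → κ < lam →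
         lam ^ κ ≤ lam] := by
  tfae_have 1 → 4 := fun gch κ lam hκ hl h => gch_power_le gch hκ.aleph0_le hl h
  tfae_have 4 → 2 := fun H κ lam hκ hl h =>
    equalCov_le_of_power_le hκ.aleph0_le h (H κ lam hκ hl h)
  tfae_have 2 → 3 := fun H κ lam hκ hl h =>
    power_le_powerlt_of_equalCov_le hκ h (H κ lam hκ hl h)
  tfae_have 3 → 4 := fun H κ lam hκ hl h => power_le_of_power_le_powerlt H hl κ hκ h
  tfae_have 4 → 1 := by
    intro H κ hκ
    have hsucc : ℵ₀ ≤ Order.succ κ := hκ.trans (Order.le_succ κ)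
    refine le_antisymm ?_ (Order.succ_le_of_lt (cantor κ))
    refine (Cardinal.power_le_power_right ((natCast_lt_aleph0 (n := 2)).le.trans hsucc)).trans ?_
    exact power_le_of_regular hsucc hκ fun ν hν hνκ =>
      H ν _ hν (isRegular_succ hκ) (Order.lt_succ_of_le hνκ)
  tfae_finish
end
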